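/- arXiv:1506.06002 — 4 statements merged into one kernel-verified Lean document; each statement's English description precedes it below -/
import Mathlib

section
/- Every element of the sister group Γ_s^(7) can be written as ε·W, where ε ∈ {1,−1} and W is a finite product of the matrices I₀ = [[0,0,i/√7],[0,1,0],[i√7,0,0]], R₁ = [[1,0,0],[0,−1,0],[0,0,1]], R₂ = [[1,1,iω₇/√7],[0,−1,1],[0,0,1]], R₃ = [[1,ω̄₇,−1],[0,−1,ω₇],[0,0,1]], T = [[1,0,i/√7],[0,1,0],[0,0,1]] and their inverses, where ω₇ = (1+i√7)/2. In other words, Γ_s^(7) is generated, modulo scalar matrices ±I, by I₀, R₁, R₂, R₃, T. -/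
noncomputable section

open Matrix

/-- The Hermitian form matrix `J`. -/
def matJ : Matrix (Fin 3) (Fin 3) ℂ := !![0,0,1; 0,1,0; 1,0,0]

/-- Membership in `U(2,1;J)`. -/
def inU21 (M : Matrix (Fin 3) (Fin 3) ℂ) : Prop := IsUnit M ∧ Mᴴ * matJ * M = matJ

/-- `i√7`. -/
def isq7 : ℂ := Complex.I * (Real.sqrt 7 : ℂ)

/-- `ω₇ = (1 + i√7)/2`. -/
def ω₇ : ℂ := (1 + Complex.I * (Real.sqrt 7 : ℂ)) / 2

/-- Membership in the ring of integers `O₇ = ℤ + ℤ·ω₇`. -/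
def inO7 (z : ℂ) : Prop := ∃ a b : ℤ, z = (a : ℂ) + (b : ℂ) * ω₇

/-- The sister group `Γ_s^(7)`. -/
def GammaS7 (M : Matrix (Fin 3) (Fin 3) ℂ) : Prop :=
  inU21 M ∧ inO7 (M 0 0) ∧ inO7 (M 0 1) ∧ inO7 (M 1 1) ∧ inO7 (M 1 2) ∧
    inO7 (M 2 2) ∧ inO7 (isq7 * M 0 2) ∧ inO7 (M 1 0 / isq7) ∧
    inO7 (M 2 0 / isq7) ∧ inO7 (M 2 1 / isq7)

def I₀ : Matrix (Fin 3) (Fin 3) ℂ :=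
  !![0, 0, Complex.I / (Real.sqrt 7 : ℂ); 0, 1, 0; Complex.I * (Real.sqrt 7 : ℂ), 0, 0]

def R₁ : Matrix (Fin 3) (Fin 3) ℂ := !![1,0,0; 0,-1,0; 0,0,1]

def R₂ : Matrix (Fin 3) (Fin 3) ℂ :=
  !![1, 1, Complex.I * ω₇ / (Real.sqrt 7 : ℂ); 0, -1, 1; 0, 0, 1]

def R₃ : Matrix (Fin 3) (Fin 3) ℂ :=
  !![1, (starRingEnd ℂ) ω₇, -1; 0, -1, ω₇; 0, 0, 1]

def T : Matrix (Fin 3) (Fin 3) ℂ :=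
  !![1, 0, Complex.I / (Real.sqrt 7 : ℂ); 0, 1, 0; 0, 0, 1]

/-!
A matrix of the group fixes the cusp at infinity exactly when its lower left entry `c` vanishes.
Otherwise its first column, an isotropic vector, has horospherical coordinates `(z, ζ, 1)` up to the
factor `c`, with `2 Re z = -|ζ|²`. Since `O₇` has covering radius `2/√7`, a Heisenberg translation in
the generated subgroup makes `|ζ|² ≤ 4/7` and `|Im z| ≤ 1/(2√7)`, so that `|z|² < 1/7`; then `I₀`
replaces `c` by `i√7·z·c`, which is strictly shorter. As `|c|²/7` is a natural number, this descent
stops at the stabilizer of infinity, which consists of the Heisenberg translations over `O₇` up to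
signs.
-/

namespace GammaS7

open Complex
open scoped ComplexConjugate

/-! ### The ring `O₇` -/

lemma isq7_mul_self : isq7 * isq7 = -7 := by
  have h : ((√7 : ℝ) : ℂ) * (√7 : ℝ) = 7 := by
    rw [← ofReal_mul, Real.mul_self_sqrt (by norm_num)]
    norm_num
  unfold isq7
  linear_combination I * I * h + 7 * I_mul_I

lemma isq7_ne_zero : isq7 ≠ 0 := by
  intro h
  simpa [h] using isq7_mul_self

lemma conj_isq7 : conj isq7 = -isq7 := by simp [isq7]

lemma normSq_isq7 : normSq isq7 = 7 := by simp [isq7]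

lemma isq7_eq_two_mul_ω₇_sub_one : isq7 = 2 * ω₇ - 1 := by
  rw [isq7, ω₇]
  ring

lemma ω₇_mul_self : ω₇ * ω₇ = ω₇ - 2 := by
  have h := isq7_mul_self
  rw [isq7_eq_two_mul_ω₇_sub_one] at h
  linear_combination h / 4

lemma conj_ω₇ : conj ω₇ = 1 - ω₇ := by
  have h := conj_isq7
  simp only [isq7_eq_two_mul_ω₇_sub_one, map_sub, map_mul, map_ofNat, map_one] at h
  linear_combination h / 2

/-- The ring of integers `O₇` as a subring of `ℂ`. -/
def ringO7 : Subring ℂ where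
  carrier := {z | inO7 z}
  one_mem' := ⟨1, 0, by simp⟩
  zero_mem' := ⟨0, 0, by simp⟩
  add_mem' := by
    rintro _ _ ⟨a, b, rfl⟩ ⟨c, d, rfl⟩
    exact ⟨a + c, b + d, by push_cast; ring⟩
  neg_mem' := by
    rintro _ ⟨a, b, rfl⟩
    exact ⟨-a, -b, by push_cast; ring⟩
  mul_mem' := by
    rintro _ _ ⟨a, b, rfl⟩ ⟨c, d, rfl⟩
    exact ⟨a * c - 2 * b * d, a * d + b * c + b * d, by
      push_cast; linear_combination (b * d : ℂ) * ω₇_mul_self⟩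

lemma ω₇_mem_ringO7 : ω₇ ∈ ringO7 := ⟨0, 1, by simp⟩

lemma isq7_mem_ringO7 : isq7 ∈ ringO7 :=
  ⟨-1, 2, by rw [isq7_eq_two_mul_ω₇_sub_one]; push_cast; ring⟩

lemma conj_mem_ringO7 {z : ℂ} (hz : z ∈ ringO7) : conj z ∈ ringO7 := by
  obtain ⟨a, b, rfl⟩ := hz
  exact ⟨a + b, -b, by
    simp only [map_add, map_mul, map_intCast, conj_ω₇]; push_cast; ring⟩

lemma normSq_add_mul_ω₇ (x y : ℝ) : normSq (x + y * ω₇) = x ^ 2 + x * y + 2 * y ^ 2 := by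
  have h7 : √7 * √7 = (7 : ℝ) := Real.mul_self_sqrt (by norm_num)
  simp only [normSq_apply, ω₇, add_re, add_im, mul_re, mul_im, div_ofNat_re, div_ofNat_im,
    ofReal_re, ofReal_im, I_re, I_im, one_re, one_im]
  linear_combination y ^ 2 / 4 * h7

lemma normSq_intCast_add_mul_ω₇ (a b : ℤ) :
    normSq (a + b * ω₇) = (a ^ 2 + a * b + 2 * b ^ 2 : ℤ) := by
  exact_mod_cast normSq_add_mul_ω₇ a b

lemma exists_natCast_eq_normSq {z : ℂ} (hz : z ∈ ringO7) : ∃ n : ℕ, normSq z = n := by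
  obtain ⟨a, b, rfl⟩ := hz
  have hpos : 0 ≤ a ^ 2 + a * b + 2 * b ^ 2 := by nlinarith [sq_nonneg (2 * a + b), sq_nonneg b]
  obtain ⟨n, hn⟩ := Int.eq_ofNat_of_zero_le hpos
  exact ⟨n, by rw [normSq_intCast_add_mul_ω₇, hn]; simp⟩

lemma eq_one_or_neg_one_of_normSq_eq_one {z : ℂ} (hz : z ∈ ringO7) (h : normSq z = 1) :
    z = 1 ∨ z = -1 := by
  obtain ⟨a, b, rfl⟩ := hz
  rw [normSq_intCast_add_mul_ω₇] at h
  have hab : a ^ 2 + a * b + 2 * b ^ 2 = 1 := by exact_mod_cast h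
  obtain rfl : b = 0 := by
    have : b ^ 2 < 1 := by nlinarith [sq_nonneg (2 * a + b)]
    simpa using this
  have ha : a = 1 ∨ a = -1 := sq_eq_one_iff.1 (by simpa using hab)
  rcases ha with rfl | rfl <;> simp

lemma eq_one_or_neg_one_of_conj_mul_eq_one {z w : ℂ} (hz : z ∈ ringO7) (hw : w ∈ ringO7)
    (h : conj z * w = 1) : w = 1 ∨ w = -1 := by
  obtain ⟨m, hm⟩ := exists_natCast_eq_normSq hz
  obtain ⟨n, hn⟩ := exists_natCast_eq_normSq hw
  have hmn : m * n = 1 := by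
    have := congrArg normSq h
    rw [map_mul, normSq_conj, hm, hn, map_one] at this
    exact_mod_cast this
  refine eq_one_or_neg_one_of_normSq_eq_one hw ?_
  rw [hn, Nat.eq_one_of_mul_eq_one_left hmn, Nat.cast_one]

lemma exists_intCast_eq_of_conj_eq {z : ℂ} (hz : z ∈ ringO7) (h : conj z = z) :
    ∃ n : ℤ, z = n := by
  obtain ⟨a, b, rfl⟩ := hz
  simp only [map_add, map_mul, map_intCast, conj_ω₇] at h
  have hb : (b : ℂ) * isq7 = 0 := by
    rw [isq7_eq_two_mul_ω₇_sub_one]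
    linear_combination -h
  have hb : (b : ℂ) = 0 := (mul_eq_zero.1 hb).resolve_right isq7_ne_zero
  exact ⟨a, by simp [hb]⟩

lemma exists_eq_add_mul_ω₇ (z : ℂ) : ∃ x y : ℝ, z = x + y * ω₇ := by
  have h7 : √7 ≠ (0 : ℝ) := by positivity
  refine ⟨z.re - z.im / √7, 2 * z.im / √7, ?_⟩
  apply Complex.ext <;> simp [ω₇] <;> field_simp
  ring

/- The triangle `0, 1, ω₇` has circumcenter `2/7 + 3/7 ω₇` and circumradius `2/√7`. Averaging with
barycentric coordinates, the squared distances from a point `P` to the vertices have mean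
`4/7 - |P - O|²`. -/
lemma exists_normSq_sub_le_of_triangle {x y : ℝ} (hx : 0 ≤ x) (hy : 0 ≤ y) (hxy : x + y ≤ 1) :
    ∃ v ∈ ringO7, normSq (x + y * ω₇ - v) ≤ 4 / 7 := by
  by_contra! h
  have h0 := h 0 (zero_mem _)
  have h1 := h 1 (one_mem _)
  have hω := h ω₇ ω₇_mem_ringO7
  have e1 : (x + y * ω₇ - 1 : ℂ) = (x - 1 : ℝ) + y * ω₇ := by push_cast; ring
  have eω : (x + y * ω₇ - ω₇ : ℂ) = x + (y - 1 : ℝ) * ω₇ := by push_cast; ring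
  rw [sub_zero, normSq_add_mul_ω₇] at h0
  rw [e1, normSq_add_mul_ω₇] at h1
  rw [eω, normSq_add_mul_ω₇] at hω
  have hO : 0 ≤ (x - 2 / 7) ^ 2 + (x - 2 / 7) * (y - 3 / 7) + 2 * (y - 3 / 7) ^ 2 := by
    rw [← normSq_add_mul_ω₇]
    exact normSq_nonneg _
  have hmean : (1 - x - y) * (x ^ 2 + x * y + 2 * y ^ 2) +
      x * ((x - 1) ^ 2 + (x - 1) * y + 2 * y ^ 2) +
      y * (x ^ 2 + x * (y - 1) + 2 * (y - 1) ^ 2) =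
      4 / 7 - ((x - 2 / 7) ^ 2 + (x - 2 / 7) * (y - 3 / 7) + 2 * (y - 3 / 7) ^ 2) := by
    ring
  nlinarith only [hx, hy, hxy, h0, h1, hω, hO, hmean]

lemma exists_normSq_sub_le (z : ℂ) : ∃ v ∈ ringO7, normSq (z - v) ≤ 4 / 7 := by
  obtain ⟨x, y, rfl⟩ := exists_eq_add_mul_ω₇ z
  have hfloor : (⌊x⌋ + ⌊y⌋ * ω₇ : ℂ) ∈ ringO7 := ⟨_, _, rfl⟩
  have hsplit : (x + y * ω₇ : ℂ) =
      ⌊x⌋ + ⌊y⌋ * ω₇ + (Int.fract x + Int.fract y * ω₇) := by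
    have hx : (x : ℂ) = ⌊x⌋ + Int.fract x := by exact_mod_cast (Int.floor_add_fract x).symm
    have hy : (y : ℂ) = ⌊y⌋ + Int.fract y := by exact_mod_cast (Int.floor_add_fract y).symm
    linear_combination hx + ω₇ * hy
  rcases le_total (Int.fract x + Int.fract y) 1 with hle | hge
  · obtain ⟨v, hv, h⟩ :=
      exists_normSq_sub_le_of_triangle (Int.fract_nonneg x) (Int.fract_nonneg y) hle
    refine ⟨_, add_mem hfloor hv, ?_⟩
    rwa [hsplit, add_sub_add_left_eq_sub]
  -- the other half of the fundamental parallelogram is the image under `w ↦ 1 + ω₇ - w`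
  · obtain ⟨v, hv, h⟩ := exists_normSq_sub_le_of_triangle
      (sub_nonneg.2 (Int.fract_lt_one x).le) (sub_nonneg.2 (Int.fract_lt_one y).le) (by linarith)
    refine ⟨_, add_mem hfloor (sub_mem (add_mem (one_mem _) ω₇_mem_ringO7) hv), ?_⟩
    rw [hsplit, add_sub_add_left_eq_sub, ← normSq_neg]
    convert h using 2
    push_cast
    ring

/-! ### The sister group -/

lemma matJ_mul_self : matJ * matJ = 1 := by
  ext i j
  fin_cases i <;> fin_cases j <;> simp [matJ, Matrix.mul_apply, Fin.sum_univ_three]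

lemma matJ_mul_conjTranspose_mul_matJ_mul {M : Matrix (Fin 3) (Fin 3) ℂ}
    (h : Mᴴ * matJ * M = matJ) : matJ * Mᴴ * matJ * M = 1 := by
  rw [Matrix.mul_assoc, Matrix.mul_assoc, ← Matrix.mul_assoc _ matJ, h, matJ_mul_self]

lemma inU21_iff {M : Matrix (Fin 3) (Fin 3) ℂ} : inU21 M ↔ Mᴴ * matJ * M = matJ :=
  and_iff_right_of_imp fun h ↦
    IsUnit.of_mul_eq_one_right _ (matJ_mul_conjTranspose_mul_matJ_mul h)

lemma form_apply {M : Matrix (Fin 3) (Fin 3) ℂ} (h : Mᴴ * matJ * M = matJ) (i j : Fin 3) :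
    conj (M 0 i) * M 2 j + conj (M 1 i) * M 1 j + conj (M 2 i) * M 0 j = matJ i j := by
  rw [← h]
  simp only [Matrix.mul_apply, Fin.sum_univ_three, matJ, conjTranspose_apply, star_def]
  simp
  ring

/-- The denominators of the sister group: its elements `M` are the isometries of the form for
which all `sisterDenom i j * M i j` lie in `O₇`. -/
def sisterDenom : Matrix (Fin 3) (Fin 3) ℂ := !![1, 1, isq7; isq7⁻¹, 1, 1; isq7⁻¹, isq7⁻¹, 1]

lemma exists_sisterDenom_eq_mul (i j k : Fin 3) :
    ∃ a ∈ ringO7, sisterDenom i k = a * (sisterDenom i j * sisterDenom j k) := by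
  have hθ := isq7_ne_zero
  refine ⟨sisterDenom i k / (sisterDenom i j * sisterDenom j k), ?_, ?_⟩ <;>
    fin_cases i <;> fin_cases j <;> fin_cases k <;>
    simp [sisterDenom, isq7_mem_ringO7, hθ, one_mem]

/-- The order in the `3 × 3` matrices cut out by the integrality conditions of the sister group. -/
def sisterOrder : Subring (Matrix (Fin 3) (Fin 3) ℂ) where
  carrier := {M | ∀ i j, sisterDenom i j * M i j ∈ ringO7}
  one_mem' i j := by
    fin_cases i <;> fin_cases j <;> simp [sisterDenom, one_mem, zero_mem]
  zero_mem' i j := by simp [zero_mem]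
  add_mem' hM hN i j := by
    simpa only [Matrix.add_apply, mul_add] using add_mem (hM i j) (hN i j)
  neg_mem' hM i j := by
    simpa only [Matrix.neg_apply, mul_neg] using neg_mem (hM i j)
  mul_mem' {M N} hM hN i k := by
    rw [Matrix.mul_apply, Finset.mul_sum]
    refine sum_mem fun j _ ↦ ?_
    obtain ⟨a, ha, h⟩ := exists_sisterDenom_eq_mul i j k
    rw [h]
    convert mul_mem ha (mul_mem (hM i j) (hN j k)) using 1
    ring

lemma mem_sisterOrder {M : Matrix (Fin 3) (Fin 3) ℂ} :
    M ∈ sisterOrder ↔ ∀ i j, sisterDenom i j * M i j ∈ ringO7 := Iff.rfl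

lemma matJ_mul_conjTranspose_mul_matJ_apply (M : Matrix (Fin 3) (Fin 3) ℂ) (i j : Fin 3) :
    (matJ * Mᴴ * matJ) i j = conj (M j.rev i.rev) := by
  simp only [Matrix.mul_apply, Fin.sum_univ_three, conjTranspose_apply]
  fin_cases i <;> fin_cases j <;> simp [matJ, Fin.rev]

lemma sisterDenom_eq_or_neg (i j : Fin 3) :
    sisterDenom i j = conj (sisterDenom j.rev i.rev) ∨
      sisterDenom i j = -conj (sisterDenom j.rev i.rev) := by
  fin_cases i <;> fin_cases j <;> simp [sisterDenom, conj_isq7, Fin.rev, inv_neg]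

lemma matJ_mul_conjTranspose_mul_matJ_mem_sisterOrder {M : Matrix (Fin 3) (Fin 3) ℂ}
    (hM : M ∈ sisterOrder) : matJ * Mᴴ * matJ ∈ sisterOrder := by
  intro i j
  have h := conj_mem_ringO7 (hM j.rev i.rev)
  rw [map_mul] at h
  rw [matJ_mul_conjTranspose_mul_matJ_apply]
  rcases sisterDenom_eq_or_neg i j with hd | hd <;> rw [hd]
  · exact h
  · rw [neg_mul]
    exact neg_mem h

lemma gammaS7_iff {M : Matrix (Fin 3) (Fin 3) ℂ} :
    GammaS7 M ↔ Mᴴ * matJ * M = matJ ∧ M ∈ sisterOrder := by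
  have hO {z : ℂ} : inO7 z ↔ z ∈ ringO7 := Iff.rfl
  simp only [GammaS7, inU21_iff, mem_sisterOrder, hO, Fin.forall_fin_succ, sisterDenom]
  simp [div_eq_inv_mul]
  tauto

/-- The sister group as a subgroup of `GL₃(ℂ)`. -/
def sisterGroup : Subgroup (GL (Fin 3) ℂ) where
  carrier := {g | GammaS7 (g : Matrix (Fin 3) (Fin 3) ℂ)}
  one_mem' := gammaS7_iff.2 ⟨by simp, one_mem _⟩
  mul_mem' {g h} hg hh := by
    obtain ⟨hgf, hgO⟩ := gammaS7_iff.1 hg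
    obtain ⟨hhf, hhO⟩ := gammaS7_iff.1 hh
    refine gammaS7_iff.2 ⟨?_, mul_mem hgO hhO⟩
    calc (g.1 * h.1)ᴴ * matJ * (g.1 * h.1) = h.1ᴴ * (g.1ᴴ * matJ * g.1) * h.1 := by
          simp only [conjTranspose_mul, Matrix.mul_assoc]
      _ = matJ := by rw [hgf, hhf]
  inv_mem' {g} hg := by
    obtain ⟨hf, hO⟩ := gammaS7_iff.1 hg
    have hinv : matJ * g.1ᴴ * matJ = g⁻¹.1 :=
      left_inv_eq_right_inv (matJ_mul_conjTranspose_mul_matJ_mul hf) g.mul_inv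
    have hform : g⁻¹.1ᴴ * matJ * g⁻¹.1 = matJ :=
      calc g⁻¹.1ᴴ * matJ * g⁻¹.1 = (g.1 * g⁻¹.1)ᴴ * matJ * (g.1 * g⁻¹.1) := by
            conv_lhs => rw [← hf]
            simp only [conjTranspose_mul, Matrix.mul_assoc]
        _ = matJ := by simp only [g.mul_inv, conjTranspose_one, one_mul, mul_one]
    exact gammaS7_iff.2 ⟨hform, hinv ▸ matJ_mul_conjTranspose_mul_matJ_mem_sisterOrder hO⟩

lemma mem_sisterGroup {g : GL (Fin 3) ℂ} :
    g ∈ sisterGroup ↔ GammaS7 (g : Matrix (Fin 3) (Fin 3) ℂ) := Iff.rfl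

lemma neg_mem_sisterGroup {g : GL (Fin 3) ℂ} (hg : g ∈ sisterGroup) : -g ∈ sisterGroup := by
  obtain ⟨hf, hO⟩ := gammaS7_iff.1 hg
  exact gammaS7_iff.2 ⟨by simpa using hf, neg_mem hO⟩

/-! ### Heisenberg translations -/

/-- The Heisenberg translation with horizontal part `ζ` and upper right entry `s`. No relation
between `ζ` and `s` is imposed; the matrix preserves the form when `s + conj s = -ζ * conj ζ`. -/
def heis (ζ s : ℂ) : GL (Fin 3) ℂ where
  val := !![1, -conj ζ, s; 0, 1, ζ; 0, 0, 1]
  inv := !![1, conj ζ, -s - conj ζ * ζ; 0, 1, -ζ; 0, 0, 1]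
  val_inv := by
    ext i j
    fin_cases i <;> fin_cases j <;> simp [Matrix.mul_apply, Fin.sum_univ_three]
  inv_val := by
    ext i j
    fin_cases i <;> fin_cases j <;> simp [Matrix.mul_apply, Fin.sum_univ_three]

lemma coe_heis (ζ s : ℂ) :
    (heis ζ s : Matrix (Fin 3) (Fin 3) ℂ) = !![1, -conj ζ, s; 0, 1, ζ; 0, 0, 1] := rfl

lemma heis_mul_heis (ζ s ζ' s' : ℂ) :
    heis ζ s * heis ζ' s' = heis (ζ + ζ') (s + s' - conj ζ * ζ') := by
  ext i j
  fin_cases i <;> fin_cases j <;>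
    simp [coe_heis, Matrix.mul_apply, Fin.sum_univ_three] <;> ring

lemma heis_mul_apply_zero (ζ s : ℂ) (g : GL (Fin 3) ℂ) (j : Fin 3) :
    (heis ζ s * g).1 0 j = g.1 0 j - conj ζ * g.1 1 j + s * g.1 2 j := by
  simp [coe_heis, Matrix.mul_apply, Fin.sum_univ_three, sub_eq_add_neg]

lemma heis_mul_apply_one (ζ s : ℂ) (g : GL (Fin 3) ℂ) (j : Fin 3) :
    (heis ζ s * g).1 1 j = g.1 1 j + ζ * g.1 2 j := by
  simp [coe_heis, Matrix.mul_apply, Fin.sum_univ_three]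

lemma heis_mul_apply_two (ζ s : ℂ) (g : GL (Fin 3) ℂ) (j : Fin 3) :
    (heis ζ s * g).1 2 j = g.1 2 j := by
  simp [coe_heis, Matrix.mul_apply, Fin.sum_univ_three]

lemma heis_zero_zero : heis 0 0 = 1 := by
  ext i j
  fin_cases i <;> fin_cases j <;> simp [coe_heis]

lemma inv_heis (ζ s : ℂ) : (heis ζ s)⁻¹ = heis (-ζ) (-s - conj ζ * ζ) := by
  rw [inv_eq_iff_mul_eq_one, heis_mul_heis, ← heis_zero_zero]
  congr 1 <;> ring

lemma form_heis_iff {ζ s : ℂ} :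
    (heis ζ s).1ᴴ * matJ * (heis ζ s).1 = matJ ↔ s + conj s = -(conj ζ * ζ) := by
  have h : (heis ζ s).1ᴴ * matJ * (heis ζ s).1 =
      !![0, 0, 1; 0, 1, 0; 1, 0, s + conj s + conj ζ * ζ] := by
    ext i j
    fin_cases i <;> fin_cases j <;>
      simp [coe_heis, matJ, Matrix.mul_apply, Fin.sum_univ_three]
    ring
  rw [h, eq_neg_iff_add_eq_zero]
  simp [matJ]

lemma heis_mem_sisterOrder_iff {ζ s : ℂ} :
    (heis ζ s).1 ∈ sisterOrder ↔ ζ ∈ ringO7 ∧ isq7 * s ∈ ringO7 := by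
  refine ⟨fun h ↦ ⟨?_, ?_⟩, fun ⟨hζ, hs⟩ i j ↦ ?_⟩
  · simpa [coe_heis, sisterDenom] using h 1 2
  · simpa [coe_heis, sisterDenom] using h 0 2
  · fin_cases i <;> fin_cases j <;>
      simp [coe_heis, sisterDenom, hζ, hs, conj_mem_ringO7, one_mem, zero_mem]

lemma heis_mem_sisterGroup_iff {ζ s : ℂ} :
    heis ζ s ∈ sisterGroup ↔
      s + conj s = -(conj ζ * ζ) ∧ ζ ∈ ringO7 ∧ isq7 * s ∈ ringO7 := by
  rw [mem_sisterGroup, gammaS7_iff, form_heis_iff, heis_mem_sisterOrder_iff]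

/-- The horizontal parts of the Heisenberg translations in a subgroup. -/
def horizontalParts (H : Subgroup (GL (Fin 3) ℂ)) : AddSubgroup ℂ where
  carrier := {ζ | ∃ s, heis ζ s ∈ H}
  zero_mem' := ⟨0, heis_zero_zero ▸ H.one_mem⟩
  add_mem' := by
    rintro ζ ζ' ⟨s, hs⟩ ⟨s', hs'⟩
    exact ⟨_, heis_mul_heis ζ s ζ' s' ▸ H.mul_mem hs hs'⟩
  neg_mem' := by
    rintro ζ ⟨s, hs⟩
    exact ⟨_, inv_heis ζ s ▸ H.inv_mem hs⟩

/-- The vertical Heisenberg translations in a subgroup. -/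
def verticalParts (H : Subgroup (GL (Fin 3) ℂ)) : AddSubgroup ℂ where
  carrier := {s | heis 0 s ∈ H}
  zero_mem' := by simp [heis_zero_zero]
  add_mem' {s s'} hs hs' := by
    simpa [heis_mul_heis] using H.mul_mem hs hs'
  neg_mem' {s} hs := by
    simpa [inv_heis] using H.inv_mem hs

/-! ### The generated group -/

/-- The group generated by `I₀, R₁, R₂, R₃, T`. -/
def generatedGroup : Subgroup (GL (Fin 3) ℂ) :=
  Subgroup.closure {g | (g : Matrix (Fin 3) (Fin 3) ℂ) ∈
    ({I₀, R₁, R₂, R₃, T} : Set (Matrix (Fin 3) (Fin 3) ℂ))}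

lemma mem_generatedGroup_of_coe_mem {g : GL (Fin 3) ℂ}
    (hg : (g : Matrix (Fin 3) (Fin 3) ℂ) ∈
      ({I₀, R₁, R₂, R₃, T} : Set (Matrix (Fin 3) (Fin 3) ℂ))) : g ∈ generatedGroup :=
  Subgroup.subset_closure hg

lemma I_div_sqrt_seven : I / (√7 : ℝ) = -isq7⁻¹ := by
  rw [isq7, mul_inv, inv_I, neg_mul, neg_neg, div_eq_mul_inv]

lemma I₀_eq : I₀ = !![0, 0, -isq7⁻¹; 0, 1, 0; isq7, 0, 0] := by
  rw [I₀, I_div_sqrt_seven, isq7]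

lemma coe_heis_zero_neg_inv_isq7 : (heis 0 (-isq7⁻¹) : Matrix (Fin 3) (Fin 3) ℂ) = T := by
  simp [coe_heis, T, I_div_sqrt_seven]

lemma coe_heis_one_mul_R₁ :
    (heis 1 (-(ω₇ / isq7)) : Matrix (Fin 3) (Fin 3) ℂ) * R₁ = R₂ := by
  have h : I * ω₇ / (√7 : ℝ) = -(ω₇ / isq7) := by
    rw [mul_div_right_comm, I_div_sqrt_seven]
    ring
  simp [coe_heis, R₁, R₂, h]

lemma coe_heis_ω₇_mul_R₁ : (heis ω₇ (-1) : Matrix (Fin 3) (Fin 3) ℂ) * R₁ = R₃ := by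
  simp [coe_heis, R₁, R₃]

lemma gammaS7_I₀ : GammaS7 I₀ := by
  refine gammaS7_iff.2 ⟨?_, fun i j ↦ ?_⟩
  · ext i j
    fin_cases i <;> fin_cases j <;>
      simp [I₀_eq, matJ, Matrix.mul_apply, Fin.sum_univ_three, conj_isq7, isq7_ne_zero]
  · fin_cases i <;> fin_cases j <;> simp [I₀_eq, sisterDenom, isq7_ne_zero, one_mem, zero_mem]

lemma gammaS7_R₁ : GammaS7 R₁ := by
  refine gammaS7_iff.2 ⟨?_, fun i j ↦ ?_⟩
  · ext i j
    fin_cases i <;> fin_cases j <;> simp [R₁, matJ, Matrix.mul_apply, Fin.sum_univ_three]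
  · fin_cases i <;> fin_cases j <;> simp [R₁, sisterDenom, one_mem, zero_mem]

lemma heis_zero_neg_inv_isq7_mem_sisterGroup : heis 0 (-isq7⁻¹) ∈ sisterGroup := by
  rw [heis_mem_sisterGroup_iff]
  simp [conj_isq7, isq7_ne_zero, inv_neg, zero_mem, one_mem]

lemma heis_one_mem_sisterGroup : heis 1 (-(ω₇ / isq7)) ∈ sisterGroup := by
  have hθ := isq7_ne_zero
  refine heis_mem_sisterGroup_iff.2 ⟨?_, one_mem _, ?_⟩
  · simp only [map_neg, map_div₀, conj_ω₇, conj_isq7, map_one]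
    field_simp
    rw [isq7_eq_two_mul_ω₇_sub_one]
    ring
  · rw [mul_neg, mul_div_cancel₀ _ hθ]
    exact neg_mem ω₇_mem_ringO7

lemma heis_ω₇_mem_sisterGroup : heis ω₇ (-1) ∈ sisterGroup := by
  refine heis_mem_sisterGroup_iff.2 ⟨?_, ω₇_mem_ringO7, ?_⟩
  · rw [map_neg, map_one, conj_ω₇]
    linear_combination -ω₇_mul_self
  · rw [mul_neg, mul_one]
    exact neg_mem isq7_mem_ringO7

lemma generatedGroup_le_sisterGroup : generatedGroup ≤ sisterGroup := by
  obtain ⟨r, hr⟩ := gammaS7_R₁.1.1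
  have hr' : r ∈ sisterGroup := mem_sisterGroup.2 (hr ▸ gammaS7_R₁)
  rw [generatedGroup, Subgroup.closure_le]
  rintro g (h | h | h | h | h) <;> rw [SetLike.mem_coe, mem_sisterGroup, h]
  · exact gammaS7_I₀
  · exact gammaS7_R₁
  · simpa [mem_sisterGroup, hr, coe_heis_one_mul_R₁] using
      mul_mem heis_one_mem_sisterGroup hr'
  · simpa [mem_sisterGroup, hr, coe_heis_ω₇_mul_R₁] using
      mul_mem heis_ω₇_mem_sisterGroup hr'
  · simpa [mem_sisterGroup, coe_heis_zero_neg_inv_isq7] using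
      heis_zero_neg_inv_isq7_mem_sisterGroup

lemma exists_mem_generatedGroup_coe_eq_R₁ :
    ∃ r ∈ generatedGroup, (r : Matrix (Fin 3) (Fin 3) ℂ) = R₁ := by
  obtain ⟨r, hr⟩ := gammaS7_R₁.1.1
  exact ⟨r, mem_generatedGroup_of_coe_mem (by simp [hr]), hr⟩

lemma exists_mem_generatedGroup_coe_eq_I₀ :
    ∃ w ∈ generatedGroup, (w : Matrix (Fin 3) (Fin 3) ℂ) = I₀ := by
  obtain ⟨w, hw⟩ := gammaS7_I₀.1.1
  exact ⟨w, mem_generatedGroup_of_coe_mem (by simp [hw]), hw⟩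

lemma mem_horizontalParts_generatedGroup {ζ : ℂ} (hζ : ζ ∈ ringO7) :
    ζ ∈ horizontalParts generatedGroup := by
  obtain ⟨r, hr, hrR⟩ := exists_mem_generatedGroup_coe_eq_R₁
  have h1 : 1 ∈ horizontalParts generatedGroup :=
    ⟨-(ω₇ / isq7), (mul_mem_cancel_right hr).1 <| mem_generatedGroup_of_coe_mem (by
      simp [hrR, coe_heis_one_mul_R₁])⟩
  have hω : ω₇ ∈ horizontalParts generatedGroup :=
    ⟨-1, (mul_mem_cancel_right hr).1 <| mem_generatedGroup_of_coe_mem (by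
      simp [hrR, coe_heis_ω₇_mul_R₁])⟩
  obtain ⟨a, b, rfl⟩ := hζ
  simpa using add_mem (zsmul_mem h1 a) (zsmul_mem hω b)

lemma intCast_div_isq7_mem_verticalParts_generatedGroup (n : ℤ) :
    n / isq7 ∈ verticalParts generatedGroup := by
  have h : -isq7⁻¹ ∈ verticalParts generatedGroup :=
    mem_generatedGroup_of_coe_mem (by simp [coe_heis_zero_neg_inv_isq7])
  simpa [div_eq_mul_inv] using zsmul_mem (neg_mem h) n

lemma mem_verticalParts_generatedGroup {s : ℂ} (hs : heis 0 s ∈ sisterGroup) :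
    s ∈ verticalParts generatedGroup := by
  obtain ⟨hre, -, hO⟩ := heis_mem_sisterGroup_iff.1 hs
  have hreal : conj (isq7 * s) = isq7 * s := by
    rw [map_mul, conj_isq7]
    linear_combination -isq7 * (by simpa using hre : s + conj s = 0)
  obtain ⟨n, hn⟩ := exists_intCast_eq_of_conj_eq hO hreal
  rw [eq_div_of_mul_eq isq7_ne_zero ((mul_comm _ _).trans hn)]
  exact intCast_div_isq7_mem_verticalParts_generatedGroup n

lemma heis_mem_generatedGroup {ζ s : ℂ} (h : heis ζ s ∈ sisterGroup) :
    heis ζ s ∈ generatedGroup := by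
  obtain ⟨s', hs'⟩ := mem_horizontalParts_generatedGroup (heis_mem_sisterGroup_iff.1 h).2.1
  have hmul : heis ζ s = heis 0 (s - s') * heis ζ s' := by simp [heis_mul_heis]
  rw [hmul] at h ⊢
  refine mul_mem (mem_verticalParts_generatedGroup ?_) hs'
  exact (mul_mem_cancel_right (generatedGroup_le_sisterGroup hs')).1 h

/-! ### The stabilizer of infinity -/

lemma entries_of_apply_two_zero_eq_zero {M : Matrix (Fin 3) (Fin 3) ℂ}
    (hM : Mᴴ * matJ * M = matJ) (h20 : M 2 0 = 0) :
    M 1 0 = 0 ∧ M 2 1 = 0 ∧ conj (M 0 0) * M 2 2 = 1 ∧ conj (M 1 1) * M 1 1 = 1 := by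
  have h10 : M 1 0 = 0 := by simpa [h20, matJ] using form_apply hM 0 0
  have h02 : conj (M 0 0) * M 2 2 = 1 := by simpa [h20, h10, matJ] using form_apply hM 0 2
  have h00 : M 0 0 ≠ 0 := by
    intro h
    simp [h] at h02
  have h21 : M 2 1 = 0 := by simpa [h20, h10, h00, matJ] using form_apply hM 0 1
  exact ⟨h10, h21, h02, by simpa [h21, matJ] using form_apply hM 1 1⟩

lemma eq_heis {g : GL (Fin 3) ℂ} (hg : g.1ᴴ * matJ * g.1 = matJ) (h20 : g.1 2 0 = 0)
    (h11 : g.1 1 1 = 1) (h22 : g.1 2 2 = 1) : g = heis (g.1 1 2) (g.1 0 2) := by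
  obtain ⟨h10, h21, -, -⟩ := entries_of_apply_two_zero_eq_zero hg h20
  have h00 : g.1 0 0 = 1 := by simpa [h20, h10, h22, matJ] using form_apply hg 2 0
  have h12 : conj (g.1 0 1) + g.1 1 2 = 0 := by
    simpa [h21, h11, h22, matJ] using form_apply hg 1 2
  have h01 : g.1 0 1 = -conj (g.1 1 2) := by
    rw [eq_neg_of_add_eq_zero_right h12, map_neg, conj_conj, neg_neg]
  ext i j
  fin_cases i <;> fin_cases j <;> simp [coe_heis, h00, h01, h10, h11, h20, h21, h22]

lemma mem_generatedGroup_of_apply_two_two_eq_one {g : GL (Fin 3) ℂ} (hg : g ∈ sisterGroup)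
    (h20 : g.1 2 0 = 0) (h22 : g.1 2 2 = 1) : g ∈ generatedGroup := by
  have of_apply_one_one {k : GL (Fin 3) ℂ} (hk : k ∈ sisterGroup) (k20 : k.1 2 0 = 0)
      (k11 : k.1 1 1 = 1) (k22 : k.1 2 2 = 1) : k ∈ generatedGroup := by
    have hkheis := eq_heis (gammaS7_iff.1 hk).1 k20 k11 k22
    rw [hkheis] at hk ⊢
    exact heis_mem_generatedGroup hk
  obtain ⟨hf, hO⟩ := gammaS7_iff.1 hg
  have h11O : g.1 1 1 ∈ ringO7 := by simpa [sisterDenom] using hO 1 1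
  obtain ⟨-, -, -, hunit⟩ := entries_of_apply_two_zero_eq_zero hf h20
  rcases eq_one_or_neg_one_of_conj_mul_eq_one h11O h11O hunit with h11 | h11
  · exact of_apply_one_one hg h20 h11 h22
  · obtain ⟨r, hr, hrR⟩ := exists_mem_generatedGroup_coe_eq_R₁
    refine (mul_mem_cancel_left hr).1 <|
      of_apply_one_one (mul_mem (generatedGroup_le_sisterGroup hr) hg) ?_ ?_ ?_ <;>
      simp [hrR, R₁, Matrix.mul_apply, Fin.sum_univ_three, h20, h11, h22]

lemma mem_or_neg_mem_generatedGroup_of_apply_two_zero_eq_zero {g : GL (Fin 3) ℂ}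
    (hg : g ∈ sisterGroup) (h20 : g.1 2 0 = 0) : g ∈ generatedGroup ∨ -g ∈ generatedGroup := by
  obtain ⟨hf, hO⟩ := gammaS7_iff.1 hg
  have h00O : g.1 0 0 ∈ ringO7 := by simpa [sisterDenom] using hO 0 0
  have h22O : g.1 2 2 ∈ ringO7 := by simpa [sisterDenom] using hO 2 2
  obtain ⟨-, -, hunit, -⟩ := entries_of_apply_two_zero_eq_zero hf h20
  rcases eq_one_or_neg_one_of_conj_mul_eq_one h00O h22O hunit with h22 | h22
  · exact .inl <| mem_generatedGroup_of_apply_two_two_eq_one hg h20 h22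
  · exact .inr <| mem_generatedGroup_of_apply_two_two_eq_one (neg_mem_sisterGroup hg)
      (by simp [h20]) (by simp [h22])

/-! ### Descent -/

lemma two_mul_re_add_normSq_eq_zero {M : Matrix (Fin 3) (Fin 3) ℂ}
    (hM : Mᴴ * matJ * M = matJ) (h20 : M 2 0 ≠ 0) :
    2 * (M 0 0 / M 2 0).re + normSq (M 1 0 / M 2 0) = 0 := by
  have h : conj (M 0 0) * M 2 0 + conj (M 1 0) * M 1 0 + conj (M 2 0) * M 0 0 = 0 := by
    simpa [matJ] using form_apply hM 0 0
  have hconj : conj (M 2 0) ≠ 0 := by simpa using h20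
  have hC : conj (M 0 0 / M 2 0) + M 0 0 / M 2 0 + conj (M 1 0 / M 2 0) * (M 1 0 / M 2 0) = 0 := by
    rw [map_div₀, map_div₀]
    field_simp
    linear_combination h
  rw [← normSq_eq_conj_mul_self, add_comm (conj _), add_conj] at hC
  exact_mod_cast hC

lemma seven_mul_normSq_lt_one {z : ℂ} {r : ℝ} (hre : 2 * z.re + r = 0) (hr0 : 0 ≤ r)
    (hr : r ≤ 4 / 7) (him : 7 * z.im ^ 2 ≤ 1 / 4) : 7 * normSq z < 1 := by
  rw [normSq_apply]
  nlinarith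

lemma exists_intCast_im_add_div_isq7 (z : ℂ) : ∃ n : ℤ, 7 * (z + n / isq7).im ^ 2 ≤ 1 / 4 := by
  refine ⟨round (√7 * z.im), ?_⟩
  have h7 : √7 ^ 2 = (7 : ℝ) := Real.sq_sqrt (by norm_num)
  have him (n : ℤ) : √7 * (z + n / isq7).im = √7 * z.im - n := by
    have h : (n / isq7 : ℂ) = (-(n / √7) : ℝ) * I := by
      push_cast
      linear_combination (n : ℂ) * I_div_sqrt_seven
    rw [h, add_im, im_ofReal_mul, I_im]
    field_simp
    ring
  calc 7 * (z + round (√7 * z.im) / isq7).im ^ 2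
      = (√7 * z.im - round (√7 * z.im)) ^ 2 := by rw [← him, mul_pow, h7]
    _ ≤ (1 / 2) ^ 2 := sq_le_sq.2 (by simpa using abs_sub_round (√7 * z.im))
    _ = 1 / 4 := by norm_num

lemma exists_heis_mem_generatedGroup (z ζ : ℂ) : ∃ τ s, heis τ s ∈ generatedGroup ∧
    normSq (ζ + τ) ≤ 4 / 7 ∧ 7 * (z - conj τ * ζ + s).im ^ 2 ≤ 1 / 4 := by
  obtain ⟨v, hv, hζ⟩ := exists_normSq_sub_le ζ
  obtain ⟨s, hs⟩ := mem_horizontalParts_generatedGroup (neg_mem hv)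
  obtain ⟨n, hn⟩ := exists_intCast_im_add_div_isq7 (z - conj (-v) * ζ + s)
  refine ⟨-v, s + n / isq7, ?_, hζ, by rwa [← add_assoc]⟩
  simpa [heis_mul_heis] using
    mul_mem hs (intCast_div_isq7_mem_verticalParts_generatedGroup n)

lemma exists_heis_seven_mul_normSq_lt_one {g : GL (Fin 3) ℂ} (hg : g ∈ sisterGroup)
    (h20 : g.1 2 0 ≠ 0) :
    ∃ τ s, heis τ s ∈ generatedGroup ∧
      7 * normSq ((heis τ s * g).1 0 0 / g.1 2 0) < 1 := by
  obtain ⟨τ, s, hτ, hζ, him⟩ :=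
    exists_heis_mem_generatedGroup (g.1 0 0 / g.1 2 0) (g.1 1 0 / g.1 2 0)
  refine ⟨τ, s, hτ, ?_⟩
  have ratio_one : (heis τ s * g).1 1 0 / g.1 2 0 = g.1 1 0 / g.1 2 0 + τ := by
    rw [heis_mul_apply_one]
    field_simp
  have ratio_zero : (heis τ s * g).1 0 0 / g.1 2 0 =
      g.1 0 0 / g.1 2 0 - conj τ * (g.1 1 0 / g.1 2 0) + s := by
    rw [heis_mul_apply_zero]
    field_simp
  have hform := (gammaS7_iff.1 (mul_mem (generatedGroup_le_sisterGroup hτ) hg)).1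
  have hre := two_mul_re_add_normSq_eq_zero hform (by rwa [heis_mul_apply_two])
  rw [heis_mul_apply_two] at hre
  exact seven_mul_normSq_lt_one hre (normSq_nonneg _) (ratio_one ▸ hζ) (ratio_zero ▸ him)

lemma exists_normSq_mul_apply_two_zero_lt {g : GL (Fin 3) ℂ} (hg : g ∈ sisterGroup)
    (h20 : g.1 2 0 ≠ 0) :
    ∃ u ∈ generatedGroup, normSq ((u * g).1 2 0) < normSq (g.1 2 0) := by
  obtain ⟨τ, s, hτ, hz⟩ := exists_heis_seven_mul_normSq_lt_one hg h20
  obtain ⟨w, hw, hwI⟩ := exists_mem_generatedGroup_coe_eq_I₀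
  have hrow (k : GL (Fin 3) ℂ) : (w * k).1 2 0 = isq7 * k.1 0 0 := by
    simp [hwI, I₀_eq, Matrix.mul_apply, Fin.sum_univ_three]
  refine ⟨w * heis τ s, mul_mem hw hτ, ?_⟩
  calc normSq ((w * heis τ s * g).1 2 0)
      = 7 * normSq ((heis τ s * g).1 0 0 / g.1 2 0) * normSq (g.1 2 0) := by
        rw [mul_assoc w, hrow, map_mul, normSq_isq7, mul_assoc, ← map_mul,
          div_mul_cancel₀ _ h20]
    _ < normSq (g.1 2 0) := mul_lt_of_lt_one_left (normSq_pos.2 h20) hz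

lemma exists_natCast_mul_seven_eq_normSq {g : GL (Fin 3) ℂ} (hg : g ∈ sisterGroup) :
    ∃ n : ℕ, normSq (g.1 2 0) = n * 7 := by
  obtain ⟨n, hn⟩ := exists_natCast_eq_normSq ((gammaS7_iff.1 hg).2 2 0)
  have hdenom : normSq (sisterDenom 2 0) = 7⁻¹ := by simp [sisterDenom, normSq_isq7]
  rw [map_mul, hdenom] at hn
  exact ⟨n, by rw [← hn]; ring⟩

theorem mem_or_neg_mem_generatedGroup {g : GL (Fin 3) ℂ} (hg : g ∈ sisterGroup) :
    g ∈ generatedGroup ∨ -g ∈ generatedGroup := by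
  obtain ⟨n, hn⟩ := exists_natCast_mul_seven_eq_normSq hg
  induction n using Nat.strong_induction_on generalizing g with
  | _ n ih =>
    by_cases h20 : g.1 2 0 = 0
    · exact mem_or_neg_mem_generatedGroup_of_apply_two_zero_eq_zero hg h20
    · obtain ⟨u, hu, hlt⟩ := exists_normSq_mul_apply_two_zero_lt hg h20
      have hug := mul_mem (generatedGroup_le_sisterGroup hu) hg
      obtain ⟨m, hm⟩ := exists_natCast_mul_seven_eq_normSq hug
      have hmn : m < n := by
        rw [hm, hn] at hlt
        exact_mod_cast lt_of_mul_lt_mul_right hlt (by norm_num)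
      have := ih m hmn hug hm
      rwa [← mul_neg, mul_mem_cancel_left hu, mul_mem_cancel_left hu] at this

lemma exists_list_prod_eq_of_mem_generatedGroup {g : GL (Fin 3) ℂ} (hg : g ∈ generatedGroup) :
    ∃ L : List (Matrix (Fin 3) (Fin 3) ℂ),
      (∀ A ∈ L, A ∈ ({I₀, R₁, R₂, R₃, T, I₀⁻¹, R₁⁻¹, R₂⁻¹, R₃⁻¹, T⁻¹} :
        Set (Matrix (Fin 3) (Fin 3) ℂ))) ∧ g.1 = L.prod := by
  rw [generatedGroup, ← Subgroup.mem_toSubmonoid, Subgroup.closure_toSubmonoid] at hg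
  obtain ⟨l, hl, rfl⟩ := Submonoid.exists_list_of_mem_closure hg
  refine ⟨l.map Units.val, ?_, map_list_prod (Units.coeHom _) l⟩
  simp only [List.mem_map]
  rintro _ ⟨a, ha, rfl⟩
  have eq_inv {B : Matrix (Fin 3) (Fin 3) ℂ} (hB : a⁻¹.1 = B) : a.1 = B⁻¹ := by
    rw [← hB, ← coe_units_inv, inv_inv]
  rcases hl a ha with (h | h | h | h | h) | (h | h | h | h | h)
  iterate 5 · simp [show a.1 = _ from h]
  iterate 5 · simp [eq_inv h]

end GammaS7

/-- `Γ_s^(7)` is generated, modulo `±I`, by `I₀, R₁, R₂, R₃, T`. -/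
theorem gammaS7_generated (M : Matrix (Fin 3) (Fin 3) ℂ) (hM : GammaS7 M) :
    ∃ (ε : ℂ) (L : List (Matrix (Fin 3) (Fin 3) ℂ)),
      (ε = 1 ∨ ε = -1) ∧
      (∀ A ∈ L, A ∈ ({I₀, R₁, R₂, R₃, T, I₀⁻¹, R₁⁻¹, R₂⁻¹, R₃⁻¹, T⁻¹} :
        Set (Matrix (Fin 3) (Fin 3) ℂ))) ∧
      M = ε • L.prod := by
  obtain ⟨g, rfl⟩ := hM.1.1
  rcases GammaS7.mem_or_neg_mem_generatedGroup (GammaS7.mem_sisterGroup.2 hM) with hg | hg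
  · obtain ⟨L, hL, hgL⟩ := GammaS7.exists_list_prod_eq_of_mem_generatedGroup hg
    exact ⟨1, L, .inl rfl, hL, by rw [one_smul, hgL]⟩
  · obtain ⟨L, hL, hgL⟩ := GammaS7.exists_list_prod_eq_of_mem_generatedGroup hg
    exact ⟨-1, L, .inr rfl, hL, by rw [← hgL, Units.val_neg, neg_one_smul, neg_neg]⟩
end
end

section
/- Let H^(2) = Γ^(2) ∩ Γ_s^(2), and set g₁ = [[0,0,1],[0,−1,0],[1,0,0]] and g₂ = [[1,0,0],[−i√2,−1,0],[−1,i√2,1]]. Then Γ^(2) is the disjoint union of the three left cosets H^(2), g₁H^(2) and g₂H^(2); in particular these three cosets are pairwise disjoint and their union is all of Γ^(2). -/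
/-!
Reduction modulo `i√2` sends `O₂` onto the field with two elements, on which complex conjugation
acts trivially. The Hermitian relation for `M ∈ Γ^(2)` thus becomes `Aᵀ * J * A = J` over
`ZMod 2`, and there it forces the first column of `A` to be one of `(1,0,0)`, `(0,0,1)`, `(1,0,1)`.
The group `H^(2)` is the stabilizer of `(1,0,0)` in this orbit, and `g₁`, `g₂` carry `(1,0,0)` to
the two other points, so the cosets are the fibres of the map sending `M` to its first column
modulo `i√2`.
-/

noncomputable section

open Matrix

/-- `i√2`. -/
def isq2 : ℂ := Complex.I * (Real.sqrt 2 : ℂ)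

/-- Membership in the ring of integers `O₂ = ℤ + ℤ·i√2`. -/
def inO2 (z : ℂ) : Prop := ∃ a b : ℤ, z = (a : ℂ) + (b : ℂ) * isq2

/-- The Picard modular group `Γ^(2)` (as a set of matrices). -/
def GammaP2 : Set (Matrix (Fin 3) (Fin 3) ℂ) :=
  {M | inU21 M ∧ ∀ j k : Fin 3, inO2 (M j k)}

/-- The sister group `Γ_s^(2)` (as a set of matrices). -/
def GammaS2 : Set (Matrix (Fin 3) (Fin 3) ℂ) :=
  {M | inU21 M ∧ inO2 (M 0 0) ∧ inO2 (M 0 1) ∧ inO2 (M 1 1) ∧ inO2 (M 1 2) ∧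
    inO2 (M 2 2) ∧ inO2 (isq2 * M 0 2) ∧ inO2 (M 1 0 / isq2) ∧
    inO2 (M 2 0 / isq2) ∧ inO2 (M 2 1 / isq2)}

/-- `H^(2) = Γ^(2) ∩ Γ_s^(2)`. -/
def H2 : Set (Matrix (Fin 3) (Fin 3) ℂ) := GammaP2 ∩ GammaS2

def g₁ : Matrix (Fin 3) (Fin 3) ℂ := !![0,0,1; 0,-1,0; 1,0,0]

def g₂ : Matrix (Fin 3) (Fin 3) ℂ :=
  !![1, 0, 0;
     -(Complex.I * (Real.sqrt 2 : ℂ)), -1, 0;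
     -1, Complex.I * (Real.sqrt 2 : ℂ), 1]

section FormUnitary

variable {n R S : Type*} [Fintype n] [DecidableEq n] [CommRing R] [StarRing R]
  [CommRing S] [StarRing S]

/-- The matrices preserving the sesquilinear form with Gram matrix `J`, that is, the unitary group
of `J` when `J` is invertible. It is encoded as a submonoid of the matrix ring, like
`Matrix.unitaryGroup`. -/
def formUnitary (J : Matrix n n R) : Submonoid (Matrix n n R) where
  carrier := {M | Mᴴ * J * M = J}
  one_mem' := by simp
  mul_mem' {A B} hA hB := calc
    (A * B)ᴴ * J * (A * B) = Bᴴ * (Aᴴ * J * A) * B := by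
      simp only [conjTranspose_mul, Matrix.mul_assoc]
    _ = J := by rw [hA, hB]

theorem mem_formUnitary {J M : Matrix n n R} : M ∈ formUnitary J ↔ Mᴴ * J * M = J := Iff.rfl

theorem exists_mem_formUnitary_mul_eq_one {J M : Matrix n n R} (hJ : IsUnit J)
    (hM : M ∈ formUnitary J) : ∃ N ∈ formUnitary J, M * N = 1 := by
  obtain ⟨K, hK⟩ := hJ.exists_left_inv
  have left_inv : K * Mᴴ * J * M = 1 := calc
    K * Mᴴ * J * M = K * (Mᴴ * J * M) := by simp only [Matrix.mul_assoc]
    _ = 1 := by rw [mem_formUnitary.1 hM, hK]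
  have right_inv : M * (K * Mᴴ * J) = 1 := mul_eq_one_comm.1 left_inv
  refine ⟨K * Mᴴ * J, ?_, right_inv⟩
  generalize K * Mᴴ * J = N at right_inv
  calc Nᴴ * J * N = Nᴴ * (Mᴴ * J * M) * N := by rw [mem_formUnitary.1 hM]
    _ = (M * N)ᴴ * J * (M * N) := by simp only [conjTranspose_mul, Matrix.mul_assoc]
    _ = J := by simp [right_inv]

theorem map_mem_formUnitary_iff {f : R →+* S} (hf : Function.Injective f)
    (hstar : Function.Semiconj f star star) {J M : Matrix n n R} :
    M.map f ∈ formUnitary (J.map f) ↔ M ∈ formUnitary J := by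
  rw [mem_formUnitary, mem_formUnitary, ← conjTranspose_map f hstar, ← Matrix.map_mul,
    ← Matrix.map_mul, (Matrix.map_injective hf).eq_iff]

end FormUnitary

section AntidiagonalForm

/-- The form matrix `J` with coefficients in an arbitrary ring. -/
def antidiagForm (R : Type*) [Zero R] [One R] : Matrix (Fin 3) (Fin 3) R :=
  !![0, 0, 1; 0, 1, 0; 1, 0, 0]

variable {R S : Type*} [CommRing R] [CommRing S]

theorem antidiagForm_map (f : R →+* S) : (antidiagForm R).map f = antidiagForm S := by
  ext i j
  fin_cases i <;> fin_cases j <;> simp [antidiagForm]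

theorem isUnit_antidiagForm : IsUnit (antidiagForm R) := by
  refine IsUnit.of_mul_eq_one (antidiagForm R) ?_
  ext i j
  fin_cases i <;> fin_cases j <;> simp [antidiagForm, Matrix.mul_apply, Fin.sum_univ_three]

theorem col_pairing_of_preserves_antidiagForm {A : Matrix (Fin 3) (Fin 3) R}
    (hA : Aᵀ * antidiagForm R * A = antidiagForm R) (i j : Fin 3) :
    A 2 i * A 0 j + A 1 i * A 1 j + A 0 i * A 2 j = antidiagForm R i j := by
  rw [← hA]
  simp [antidiagForm, Matrix.mul_apply, Fin.sum_univ_three]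

theorem apply_one_zero_eq_zero_of_preserves_antidiagForm [IsReduced R] [CharP R 2]
    {A : Matrix (Fin 3) (Fin 3) R} (hA : Aᵀ * antidiagForm R * A = antidiagForm R) :
    A 1 0 = 0 := by
  have isotropic : A 2 0 * A 0 0 + A 1 0 * A 1 0 + A 0 0 * A 2 0 = 0 := by
    simpa [antidiagForm] using col_pairing_of_preserves_antidiagForm hA 0 0
  have sq_eq_zero : A 1 0 ^ 2 = 0 := by
    linear_combination isotropic - A 0 0 * A 2 0 * CharTwo.two_eq_zero (R := R)
  exact eq_zero_of_pow_eq_zero sq_eq_zero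

theorem apply_two_one_eq_zero_of_preserves_antidiagForm
    {A : Matrix (Fin 3) (Fin 3) R} (hA : Aᵀ * antidiagForm R * A = antidiagForm R)
    (h₁ : A 1 0 = 0) (h₂ : A 2 0 = 0) : A 2 1 = 0 := by
  have pairing₀₁ : A 0 0 * A 2 1 = 0 := by
    simpa [antidiagForm, h₁, h₂] using col_pairing_of_preserves_antidiagForm hA 0 1
  have pairing₀₂ : A 0 0 * A 2 2 = 1 := by
    simpa [antidiagForm, h₁, h₂] using col_pairing_of_preserves_antidiagForm hA 0 2
  linear_combination A 2 2 * pairing₀₁ - A 2 1 * pairing₀₂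

theorem col_zero_cases_of_preserves_antidiagForm {A : Matrix (Fin 3) (Fin 3) (ZMod 2)}
    (hA : Aᵀ * antidiagForm (ZMod 2) * A = antidiagForm (ZMod 2)) :
    A.col 0 = ![1, 0, 0] ∨ A.col 0 = ![0, 0, 1] ∨ A.col 0 = ![1, 0, 1] := by
  have h₁ : A 1 0 = 0 := apply_one_zero_eq_zero_of_preserves_antidiagForm hA
  have col_eq : A.col 0 = ![A 0 0, 0, A 2 0] := by
    ext i
    fin_cases i <;> simp [h₁]
  have pairing₀₂ : A 2 0 * A 0 2 + A 0 0 * A 2 2 = 1 := by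
    simpa [antidiagForm, h₁] using col_pairing_of_preserves_antidiagForm hA 0 2
  have not_both_zero : ¬(A 0 0 = 0 ∧ A 2 0 = 0) := by
    rintro ⟨h₀, h₂⟩
    simp [h₀, h₂] at pairing₀₂
  rw [col_eq]
  revert not_both_zero
  generalize A 0 0 = a, A 2 0 = c
  decide +revert

end AntidiagonalForm

section RingOfIntegers

theorem isq2_mul_self : isq2 * isq2 = -2 := by
  rw [isq2, mul_mul_mul_comm, Complex.I_mul_I, ← Complex.ofReal_mul,
    Real.mul_self_sqrt zero_le_two]
  norm_num

theorem isq2_ne_zero : isq2 ≠ 0 := by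
  intro h
  simpa [h] using isq2_mul_self

/-- The embedding of `ℤ√(-2)` into `ℂ` with image `O₂`, sending `√(-2)` to `i√2`. -/
def toComplex : ℤ√(-2) →+* ℂ :=
  Zsqrtd.lift ⟨isq2, by rw [isq2_mul_self]; norm_num⟩

theorem toComplex_apply (x : ℤ√(-2)) : toComplex x = x.re + x.im * isq2 := rfl

theorem toComplex_sqrtd : toComplex Zsqrtd.sqrtd = isq2 := by
  simp [toComplex_apply]

theorem toComplex_injective : Function.Injective toComplex :=
  Zsqrtd.lift_injective _ fun n hn => by nlinarith [mul_self_nonneg n]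

theorem toComplex_star : Function.Semiconj toComplex star star := fun x => by
  simp [toComplex_apply, isq2]

theorem inO2_iff_exists_toComplex {z : ℂ} : inO2 z ↔ ∃ x, toComplex x = z :=
  ⟨fun ⟨a, b, h⟩ => ⟨⟨a, b⟩, h.symm⟩, fun ⟨x, h⟩ => ⟨x.re, x.im, h.symm⟩⟩

theorem inO2_toComplex (x : ℤ√(-2)) : inO2 (toComplex x) :=
  inO2_iff_exists_toComplex.2 ⟨x, rfl⟩

/-- Reduction modulo `√(-2)`. -/
def residue : ℤ√(-2) →+* ZMod 2 := Zsqrtd.lift ⟨0, by decide⟩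

theorem residue_apply (x : ℤ√(-2)) : residue x = x.re := by
  simp [residue]

theorem residue_star (x : ℤ√(-2)) : residue (star x) = residue x := by
  simp [residue_apply]

theorem residue_eq_zero_iff {x : ℤ√(-2)} : residue x = 0 ↔ Zsqrtd.sqrtd ∣ x := by
  constructor
  · rw [residue_apply, ZMod.intCast_zmod_eq_zero_iff_dvd]
    rintro ⟨k, hk⟩
    exact ⟨⟨x.im, -k⟩, by ext <;> simp [hk]⟩
  · rintro ⟨y, rfl⟩
    have residue_sqrtd : residue Zsqrtd.sqrtd = 0 := by simp [residue_apply]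
    rw [map_mul, residue_sqrtd, zero_mul]

theorem inO2_toComplex_div_isq2_iff {x : ℤ√(-2)} :
    inO2 (toComplex x / isq2) ↔ residue x = 0 := by
  rw [inO2_iff_exists_toComplex, residue_eq_zero_iff, dvd_iff_exists_eq_mul_right]
  refine exists_congr fun y => ?_
  rw [eq_div_iff isq2_ne_zero, ← toComplex_sqrtd, ← map_mul, toComplex_injective.eq_iff,
    mul_comm, eq_comm]

end RingOfIntegers

section PicardModularGroup

theorem inU21_iff_mem_formUnitary {M : Matrix (Fin 3) (Fin 3) ℂ} :
    inU21 M ↔ M ∈ formUnitary matJ := by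
  refine ⟨And.right, fun hM => ⟨?_, hM⟩⟩
  obtain ⟨N, -, hN⟩ := exists_mem_formUnitary_mul_eq_one isUnit_antidiagForm hM
  exact IsUnit.of_mul_eq_one N hN

theorem inU21_map_toComplex_iff {N : Matrix (Fin 3) (Fin 3) (ℤ√(-2))} :
    inU21 (N.map toComplex) ↔ N ∈ formUnitary (antidiagForm _) := by
  rw [inU21_iff_mem_formUnitary, ← map_mem_formUnitary_iff toComplex_injective toComplex_star,
    antidiagForm_map]
  rfl

theorem gammaP2_eq_image_formUnitary :
    GammaP2 = (Matrix.map · toComplex) '' (formUnitary (antidiagForm (ℤ√(-2))) : Set _) := by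
  ext M
  constructor
  · rintro ⟨hM, hint⟩
    choose N hN using fun j k => inO2_iff_exists_toComplex.1 (hint j k)
    obtain rfl : (of N).map toComplex = M := Matrix.ext hN
    exact ⟨of N, inU21_map_toComplex_iff.1 hM, rfl⟩
  · rintro ⟨N, hN, rfl⟩
    exact ⟨inU21_map_toComplex_iff.2 hN, fun j k => inO2_toComplex (N j k)⟩

theorem map_toComplex_mem_gammaS2_iff {N : Matrix (Fin 3) (Fin 3) (ℤ√(-2))}
    (hN : N ∈ formUnitary (antidiagForm _)) :
    N.map toComplex ∈ GammaS2 ↔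
      residue (N 1 0) = 0 ∧ residue (N 2 0) = 0 ∧ residue (N 2 1) = 0 := by
  have inO2_isq2_mul (x : ℤ√(-2)) : inO2 (isq2 * toComplex x) := by
    rw [← toComplex_sqrtd, ← map_mul]
    exact inO2_toComplex _
  simp [GammaS2, inU21_map_toComplex_iff.2 hN, inO2_toComplex, inO2_isq2_mul,
    inO2_toComplex_div_isq2_iff]

theorem transpose_map_residue_mul {N : Matrix (Fin 3) (Fin 3) (ℤ√(-2))}
    (hN : N ∈ formUnitary (antidiagForm _)) :
    (N.map residue)ᵀ * antidiagForm _ * N.map residue = antidiagForm _ := by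
  have conj_trivial : Nᴴ.map residue = (N.map residue)ᵀ :=
    Matrix.ext fun i j => residue_star (N j i)
  rw [← conj_trivial, ← antidiagForm_map residue, ← Matrix.map_mul, ← Matrix.map_mul,
    mem_formUnitary.1 hN]

/-- The first column of `N` modulo `√(-2)`, that is, the image of the first basis vector under the
action of `N` on `(ZMod 2)³`. -/
def residueCol (N : Matrix (Fin 3) (Fin 3) (ℤ√(-2))) : Fin 3 → ZMod 2 := (N.map residue).col 0

theorem residueCol_mul (N P : Matrix (Fin 3) (Fin 3) (ℤ√(-2))) :
    residueCol (N * P) = N.map residue *ᵥ residueCol P := by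
  ext i
  simp [residueCol, Matrix.map_mul, Matrix.mul_apply, Matrix.mulVec, dotProduct]

theorem residueCol_cases {N : Matrix (Fin 3) (Fin 3) (ℤ√(-2))}
    (hN : N ∈ formUnitary (antidiagForm _)) :
    residueCol N = ![1, 0, 0] ∨ residueCol N = ![0, 0, 1] ∨ residueCol N = ![1, 0, 1] :=
  col_zero_cases_of_preserves_antidiagForm (transpose_map_residue_mul hN)

theorem map_toComplex_mem_H2_iff {N : Matrix (Fin 3) (Fin 3) (ℤ√(-2))}
    (hN : N ∈ formUnitary (antidiagForm _)) :
    N.map toComplex ∈ H2 ↔ residueCol N = ![1, 0, 0] := by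
  have hA := transpose_map_residue_mul hN
  have h₁₀ : residue (N 1 0) = 0 := apply_one_zero_eq_zero_of_preserves_antidiagForm hA
  have h₂₁ : residue (N 2 0) = 0 → residue (N 2 1) = 0 :=
    apply_two_one_eq_zero_of_preserves_antidiagForm hA h₁₀
  have mem_gammaP2 : N.map toComplex ∈ GammaP2 :=
    gammaP2_eq_image_formUnitary ▸ Set.mem_image_of_mem _ hN
  calc N.map toComplex ∈ H2 ↔ residue (N 2 0) = 0 := by
        rw [H2, Set.mem_inter_iff, map_toComplex_mem_gammaS2_iff hN]
        tauto
    _ ↔ residueCol N 2 = 0 := Iff.rfl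
    _ ↔ residueCol N = ![1, 0, 0] := by
        rcases residueCol_cases hN with h | h | h <;> simp [h]

/-- The matrices in `Γ^(2)` whose first column reduces to `v` modulo `i√2`. -/
def residueFiber (v : Fin 3 → ZMod 2) : Set (Matrix (Fin 3) (Fin 3) ℂ) :=
  (Matrix.map · toComplex) '' {N | N ∈ formUnitary (antidiagForm (ℤ√(-2))) ∧ residueCol N = v}

theorem disjoint_residueFiber {v w : Fin 3 → ZMod 2} (hvw : v ≠ w) :
    Disjoint (residueFiber v) (residueFiber w) := by
  rw [residueFiber, residueFiber, Set.disjoint_image_iff (Matrix.map_injective toComplex_injective),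
    Set.disjoint_left]
  rintro N ⟨-, hv⟩ ⟨-, hw⟩
  exact hvw (hv.symm.trans hw)

theorem gammaP2_eq_union_residueFiber :
    GammaP2 = residueFiber ![1, 0, 0] ∪ residueFiber ![0, 0, 1] ∪ residueFiber ![1, 0, 1] := by
  simp only [gammaP2_eq_image_formUnitary, residueFiber, ← Set.image_union]
  congr 1
  ext N
  have cases_of_mem := residueCol_cases (N := N)
  simp only [SetLike.mem_coe, Set.mem_union, Set.mem_ofPred_eq]
  tauto

theorem H2_eq_residueFiber : H2 = residueFiber ![1, 0, 0] := by
  ext M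
  constructor
  · intro hM
    obtain ⟨N, hN, rfl⟩ := gammaP2_eq_image_formUnitary ▸ hM.1
    exact ⟨N, ⟨hN, (map_toComplex_mem_H2_iff hN).1 hM⟩, rfl⟩
  · rintro ⟨N, ⟨hN, hcol⟩, rfl⟩
    exact (map_toComplex_mem_H2_iff hN).2 hcol

theorem image_mul_left_residueFiber {γ : Matrix (Fin 3) (Fin 3) (ℤ√(-2))}
    (hγ : γ ∈ formUnitary (antidiagForm _)) (v : Fin 3 → ZMod 2) :
    (γ.map toComplex * ·) '' residueFiber v = residueFiber (γ.map residue *ᵥ v) := by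
  apply Set.Subset.antisymm
  · rintro _ ⟨_, ⟨N, ⟨hN, rfl⟩, rfl⟩, rfl⟩
    exact ⟨γ * N, ⟨mul_mem hγ hN, residueCol_mul γ N⟩, Matrix.map_mul⟩
  · rintro _ ⟨N, ⟨hN, hcol⟩, rfl⟩
    obtain ⟨δ, hδ, γδ⟩ := exists_mem_formUnitary_mul_eq_one isUnit_antidiagForm hγ
    have δγ : δ * γ = 1 := mul_eq_one_comm.1 γδ
    refine ⟨(δ * N).map toComplex, ⟨δ * N, ⟨mul_mem hδ hN, ?_⟩, rfl⟩, ?_⟩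
    · rw [residueCol_mul, hcol, Matrix.mulVec_mulVec, ← Matrix.map_mul, δγ]
      simp
    · simp only [← Matrix.map_mul, ← Matrix.mul_assoc, γδ, Matrix.one_mul]

theorem image_mul_left_g₁_H2 : (g₁ * ·) '' H2 = residueFiber ![0, 0, 1] := by
  let γ : Matrix (Fin 3) (Fin 3) (ℤ√(-2)) := !![0, 0, 1; 0, -1, 0; 1, 0, 0]
  have hγ : γ ∈ formUnitary (antidiagForm _) := by
    rw [mem_formUnitary]
    decide
  have map_γ : γ.map toComplex = g₁ := by
    ext i j
    fin_cases i <;> fin_cases j <;> simp [γ, g₁]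
  rw [H2_eq_residueFiber, ← map_γ, image_mul_left_residueFiber hγ]
  congr 1
  decide

theorem image_mul_left_g₂_H2 : (g₂ * ·) '' H2 = residueFiber ![1, 0, 1] := by
  let γ : Matrix (Fin 3) (Fin 3) (ℤ√(-2)) :=
    !![1, 0, 0; -Zsqrtd.sqrtd, -1, 0; -1, Zsqrtd.sqrtd, 1]
  have hγ : γ ∈ formUnitary (antidiagForm _) := by
    rw [mem_formUnitary]
    decide
  have map_γ : γ.map toComplex = g₂ := by
    ext i j
    fin_cases i <;> fin_cases j <;> simp [γ, g₂, toComplex_sqrtd, isq2]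
  rw [H2_eq_residueFiber, ← map_γ, image_mul_left_residueFiber hγ]
  congr 1
  decide

end PicardModularGroup

/-- `Γ^(2)` is the disjoint union of the three left cosets `H^(2)`, `g₁H^(2)`, `g₂H^(2)`. -/
theorem gammaP2_coset_decomposition :
    (GammaP2 = H2 ∪ (g₁ * ·) '' H2 ∪ (g₂ * ·) '' H2) ∧
    Disjoint H2 ((g₁ * ·) '' H2) ∧
    Disjoint H2 ((g₂ * ·) '' H2) ∧
    Disjoint ((g₁ * ·) '' H2) ((g₂ * ·) '' H2) := by
  rw [image_mul_left_g₁_H2, image_mul_left_g₂_H2, H2_eq_residueFiber]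
  exact ⟨gammaP2_eq_union_residueFiber, disjoint_residueFiber (by decide),
    disjoint_residueFiber (by decide), disjoint_residueFiber (by decide)⟩
end
end

section
/- Let H^(2) = Γ^(2) ∩ Γ_s^(2), and set g₁' = [[0,0,i/√2],[0,1,0],[i√2,0,0]] and g₂' = [[1,0,i/√2],[0,1,0],[0,0,1]]. Then Γ_s^(2) is the disjoint union of the three left cosets H^(2), g₁'H^(2) and g₂'H^(2); in particular these three cosets are pairwise disjoint and their union is all of Γ_s^(2). -/
noncomputable section

open Matrix

def g₁' : Matrix (Fin 3) (Fin 3) ℂ :=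
  !![0, 0, Complex.I / (Real.sqrt 2 : ℂ); 0, 1, 0; Complex.I * (Real.sqrt 2 : ℂ), 0, 0]

def g₂' : Matrix (Fin 3) (Fin 3) ℂ :=
  !![1, 0, Complex.I / (Real.sqrt 2 : ℂ); 0, 1, 0; 0, 0, 1]

/-!
Write `π = i√2`. Membership of `M ∈ Γ_s` in `H` only depends on its last column: it means that
`π * M 0 2` vanishes modulo `π`. Since `O₂ / π` is the field with two elements and unitarity
prevents `π * M 0 2` and `M 2 2` from both vanishing modulo `π`, this pair is a point of the
projective line over `𝔽₂`. Its three points `(0 : 1)`, `(1 : 0)` and `(1 : 1)` correspond to the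
cosets `H`, `g₁'H` and `g₂'H`. The coset of `M` is read off the Hermitian products of the last
column of `M` with those of `g₁'` and `g₂'`, because `g⁻¹ * M` has this product as its
upper right entry.
-/

section IsTiled

variable {n K : Type*} [Field K] {R : Subring K} {p : K} {e : n → n → ℤ} {M N : Matrix n n K}

/-- `M` lies in the tiled lattice with exponents `e`: for `p ≠ 0`, its `(i, j)` entry belongs to
`p ^ e i j • R`. The sister group is cut out of `U(2,1;J)` by such a condition. -/
def IsTiled (R : Subring K) (p : K) (e : n → n → ℤ) (M : Matrix n n K) : Prop :=
  ∀ i j, M i j / p ^ e i j ∈ R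

theorem IsTiled.mul [Fintype n] (hp : p ∈ R) (hp₀ : p ≠ 0)
    (he : ∀ i j k, e i k ≤ e i j + e j k) (hM : IsTiled R p e M) (hN : IsTiled R p e N) :
    IsTiled R p e (M * N) := by
  intro i k
  rw [mul_apply, Finset.sum_div]
  refine R.sum_mem fun j _ ↦ ?_
  obtain ⟨m, hm⟩ := Int.le.dest (he i j k)
  have h_factor : M i j * N j k / p ^ e i k =
      M i j / p ^ e i j * (N j k / p ^ e j k) * p ^ m := by
    rw [div_mul_div_comm, ← zpow_add₀ hp₀, ← hm, zpow_add₀ hp₀, zpow_natCast]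
    field_simp
  rw [h_factor]
  exact R.mul_mem (R.mul_mem (hM i j) (hN j k)) (R.pow_mem hp m)

end IsTiled

theorem star_isq2 : star isq2 = -isq2 := by
  simp [isq2]

theorem I_div_sqrt_two_eq_neg_inv_isq2 : Complex.I / (√2 : ℂ) = -isq2⁻¹ := by
  simp [isq2, div_eq_mul_inv, mul_comm]

/-- The ring of integers `O₂` as a subring of `ℂ`, encoded as the image of `ℤ√(-2)`. -/
def ringO₂ : Subring ℂ :=
  (Zsqrtd.lift (d := -2) ⟨isq2, by simpa using isq2_mul_self⟩).range

theorem mem_ringO₂ {z : ℂ} : z ∈ ringO₂ ↔ inO2 z :=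
  ⟨fun ⟨w, hw⟩ ↦ ⟨w.re, w.im, hw.symm⟩, fun ⟨a, b, hz⟩ ↦ ⟨⟨a, b⟩, hz.symm⟩⟩

theorem isq2_mem_ringO₂ : isq2 ∈ ringO₂ :=
  mem_ringO₂.2 ⟨0, 1, by simp⟩

theorem star_mem_ringO₂ {z : ℂ} (hz : z ∈ ringO₂) : star z ∈ ringO₂ := by
  obtain ⟨a, b, rfl⟩ := mem_ringO₂.1 hz
  exact mem_ringO₂.2 ⟨a, -b, by rw [star_add, star_mul', star_isq2]; simp⟩

theorem star_div_zpow_mem_ringO₂ {z : ℂ} {k : ℤ} (hz : z / isq2 ^ k ∈ ringO₂) :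
    star z / isq2 ^ k ∈ ringO₂ := by
  have h_star : star z / (-isq2) ^ k ∈ ringO₂ := by
    simpa only [star_div₀, star_zpow₀, star_isq2] using star_mem_ringO₂ hz
  rcases Int.even_or_odd k with hk | hk
  · rwa [hk.neg_zpow] at h_star
  · rwa [hk.neg_zpow, div_neg, neg_mem_iff] at h_star

theorem isq2_inv_notMem_ringO₂ : isq2⁻¹ ∉ ringO₂ := by
  intro h
  obtain ⟨a, b, hab⟩ := mem_ringO₂.1 h
  have h_one : (1 : ℂ) = a * isq2 - 2 * b := by
    linear_combination (b : ℂ) * isq2_mul_self + isq2 * hab - mul_inv_cancel₀ isq2_ne_zero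
  have h_re : (1 : ℝ) = -(2 * b) := by
    simpa [isq2] using congrArg Complex.re h_one
  have h_int : (1 : ℤ) = -(2 * b) := by
    exact_mod_cast h_re
  lia

theorem div_isq2_mem_or_add_one_div_isq2_mem {z : ℂ} (hz : z ∈ ringO₂) :
    z / isq2 ∈ ringO₂ ∨ (z + 1) / isq2 ∈ ringO₂ := by
  have h_even (c b : ℤ) : (2 * c + b * isq2) / isq2 ∈ ringO₂ := by
    refine mem_ringO₂.2 ⟨b, -c, ?_⟩
    rw [div_eq_iff isq2_ne_zero]
    push_cast
    linear_combination (c : ℂ) * isq2_mul_self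
  obtain ⟨a, b, rfl⟩ := mem_ringO₂.1 hz
  obtain ⟨c, rfl | rfl⟩ := Int.even_or_odd' a
  · left
    simpa using h_even c b
  · right
    convert h_even (c + 1) b using 2
    push_cast
    ring

theorem mem_or_mem_or_add_mem_ringO₂ {x y : ℂ} (hx : isq2 * x ∈ ringO₂)
    (hy : isq2 * y ∈ ringO₂) : x ∈ ringO₂ ∨ y ∈ ringO₂ ∨ x + y ∈ ringO₂ := by
  rcases div_isq2_mem_or_add_one_div_isq2_mem hx with hx | hx
  · exact .inl (by rwa [mul_div_cancel_left₀ _ isq2_ne_zero] at hx)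
  rcases div_isq2_mem_or_add_one_div_isq2_mem hy with hy | hy
  · exact .inr (.inl (by rwa [mul_div_cancel_left₀ _ isq2_ne_zero] at hy))
  have h_add : x + y = (isq2 * x + 1) / isq2 + (isq2 * y + 1) / isq2 + isq2 := by
    field_simp [isq2_ne_zero]
    linear_combination -isq2_mul_self
  rw [h_add]
  exact .inr (.inr (add_mem (add_mem hx hy) isq2_mem_ringO₂))

/-- The adjoint of `M` with respect to the Hermitian form `J`, which is the inverse of `M` when
`M ∈ U(2,1;J)`. -/
def adjJ (M : Matrix (Fin 3) (Fin 3) ℂ) : Matrix (Fin 3) (Fin 3) ℂ := matJ * Mᴴ * matJ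

section Unitary

variable {M N : Matrix (Fin 3) (Fin 3) ℂ}

theorem matJ_mul_self : matJ * matJ = 1 := by
  simp [matJ, one_fin_three]

theorem adjJ_apply (M : Matrix (Fin 3) (Fin 3) ℂ) (i j : Fin 3) :
    adjJ M i j = star (M j.rev i.rev) := by
  fin_cases i <;> fin_cases j <;>
    simp [adjJ, matJ, mul_apply, vecMul, dotProduct, Fin.sum_univ_three]

theorem adjJ_adjJ (M : Matrix (Fin 3) (Fin 3) ℂ) : adjJ (adjJ M) = M := by
  ext i j
  simp [adjJ_apply]

theorem adjJ_mul (M N : Matrix (Fin 3) (Fin 3) ℂ) : adjJ (M * N) = adjJ N * adjJ M := by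
  simp only [adjJ, conjTranspose_mul, Matrix.mul_assoc]
  rw [← Matrix.mul_assoc matJ matJ, matJ_mul_self, Matrix.one_mul]

theorem inU21_iff_adjJ_mul_self : inU21 M ↔ adjJ M * M = 1 := by
  have h_form : Mᴴ * matJ * M = matJ * (adjJ M * M) := by
    simp only [adjJ, ← Matrix.mul_assoc, matJ_mul_self, Matrix.one_mul]
  constructor
  · rintro ⟨-, h⟩
    rw [← Matrix.one_mul (adjJ M * M), ← matJ_mul_self, Matrix.mul_assoc, ← h_form, h]
  · intro h
    exact ⟨.of_mul_eq_one_right _ h, by rw [h_form, h, Matrix.mul_one]⟩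

theorem inU21.mul (hM : inU21 M) (hN : inU21 N) : inU21 (M * N) := by
  rw [inU21_iff_adjJ_mul_self] at hM hN ⊢
  rw [adjJ_mul, Matrix.mul_assoc, ← Matrix.mul_assoc (adjJ M), hM, Matrix.one_mul, hN]

theorem inU21.mul_adjJ (hM : inU21 M) : M * adjJ M = 1 :=
  mul_eq_one_comm.1 (inU21_iff_adjJ_mul_self.1 hM)

theorem inU21.adjJ (hM : inU21 M) : inU21 (adjJ M) := by
  rw [inU21_iff_adjJ_mul_self, adjJ_adjJ, hM.mul_adjJ]

end Unitary

/-- The exponents of the tiled lattice that defines the sister group: the `(i, j)` entry of an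
element of `Γ_s^(2)` ranges in the fractional ideal of `O₂` generated by `(i√2) ^ sisterExp i j`. -/
def sisterExp : Fin 3 → Fin 3 → ℤ := !![0, 0, -1; 1, 0, 0; 1, 1, 0]

section Sister

variable {g M N : Matrix (Fin 3) (Fin 3) ℂ}

theorem sisterExp_le_add (i j k : Fin 3) : sisterExp i k ≤ sisterExp i j + sisterExp j k := by
  revert i j k
  decide

theorem sisterExp_rev_rev (i j : Fin 3) : sisterExp j.rev i.rev = sisterExp i j := by
  revert i j
  decide

theorem mem_GammaS2_iff_isTiled : M ∈ GammaS2 ↔ inU21 M ∧ IsTiled ringO₂ isq2 sisterExp M := by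
  have h_rows : IsTiled ringO₂ isq2 sisterExp M ↔
      (inO2 (M 0 0) ∧ inO2 (M 0 1) ∧ inO2 (isq2 * M 0 2)) ∧
      (inO2 (M 1 0 / isq2) ∧ inO2 (M 1 1) ∧ inO2 (M 1 2)) ∧
      (inO2 (M 2 0 / isq2) ∧ inO2 (M 2 1 / isq2) ∧ inO2 (M 2 2)) := by
    simp [IsTiled, mem_ringO₂, sisterExp, Fin.forall_fin_succ, mul_comm isq2]
  rw [h_rows, GammaS2, Set.mem_ofPred_eq]
  tauto

theorem mul_mem_GammaS2 (hM : M ∈ GammaS2) (hN : N ∈ GammaS2) : M * N ∈ GammaS2 := by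
  rw [mem_GammaS2_iff_isTiled] at hM hN ⊢
  exact ⟨hM.1.mul hN.1, hM.2.mul isq2_mem_ringO₂ isq2_ne_zero sisterExp_le_add hN.2⟩

theorem adjJ_mem_GammaS2 (hM : M ∈ GammaS2) : adjJ M ∈ GammaS2 := by
  rw [mem_GammaS2_iff_isTiled] at hM ⊢
  refine ⟨hM.1.adjJ, fun i j ↦ ?_⟩
  rw [adjJ_apply, ← sisterExp_rev_rev i j]
  exact star_div_zpow_mem_ringO₂ (hM.2 _ _)

theorem mem_H2_iff : M ∈ H2 ↔ M ∈ GammaS2 ∧ M 0 2 ∈ ringO₂ := by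
  refine ⟨fun h ↦ ⟨h.2, mem_ringO₂.2 (h.1.2 0 2)⟩, fun ⟨hM, h_corner⟩ ↦ ⟨⟨hM.1, ?_⟩, hM⟩⟩
  have h_integral {z : ℂ} (hz : inO2 (z / isq2)) : inO2 z := by
    rw [← mem_ringO₂] at hz ⊢
    simpa [isq2_ne_zero] using mul_mem hz isq2_mem_ringO₂
  obtain ⟨-, h00, h01, h11, h12, h22, -, h10, h20, h21⟩ := hM
  intro i j
  fin_cases i <;> fin_cases j
  exacts [h00, h01, mem_ringO₂.1 h_corner, h_integral h10, h11, h12, h_integral h20,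
    h_integral h21, h22]

theorem mem_image_mul_H2_iff (hg : g ∈ GammaS2) :
    M ∈ (g * ·) '' H2 ↔ M ∈ GammaS2 ∧ (adjJ g * M) 0 2 ∈ ringO₂ := by
  constructor
  · rintro ⟨N, hN, rfl⟩
    refine ⟨mul_mem_GammaS2 hg hN.2, ?_⟩
    simpa only [← Matrix.mul_assoc, inU21_iff_adjJ_mul_self.1 hg.1, Matrix.one_mul] using
      (mem_H2_iff.1 hN).2
  · rintro ⟨hM, h_corner⟩
    refine ⟨adjJ g * M, mem_H2_iff.2 ⟨mul_mem_GammaS2 (adjJ_mem_GammaS2 hg) hM, h_corner⟩, ?_⟩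
    simp only [← Matrix.mul_assoc, hg.1.mul_adjJ, Matrix.one_mul]

theorem upper_right_or_lower_right_div_or_add_mem_ringO₂ (hM : M ∈ GammaS2) :
    M 0 2 ∈ ringO₂ ∨ M 2 2 / isq2 ∈ ringO₂ ∨ M 0 2 + M 2 2 / isq2 ∈ ringO₂ := by
  obtain ⟨-, -, -, -, -, h22, h02, -⟩ := hM
  refine mem_or_mem_or_add_mem_ringO₂ (mem_ringO₂.2 h02) ?_
  rwa [mul_div_cancel₀ _ isq2_ne_zero, mem_ringO₂]

theorem lower_right_div_notMem_ringO₂ (hM : M ∈ GammaS2) (h02 : M 0 2 ∈ ringO₂) :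
    M 2 2 / isq2 ∉ ringO₂ := by
  intro h22
  obtain ⟨-, -, -, -, -, hA22, -, -, hA20, hA21⟩ := adjJ_mem_GammaS2 hM
  have h12 : inO2 (M 1 2) := hM.2.2.2.2.1
  rw [← mem_ringO₂] at hA20 hA21 hA22 h12
  have h_unitary : adjJ M 2 0 * M 0 2 + adjJ M 2 1 * M 1 2 + adjJ M 2 2 * M 2 2 = 1 := by
    simpa [mul_apply, Fin.sum_univ_three] using
      congrFun (congrFun (inU21_iff_adjJ_mul_self.1 hM.1) 2) 2
  have h_inv : isq2⁻¹ = adjJ M 2 0 / isq2 * M 0 2 + adjJ M 2 1 / isq2 * M 1 2 +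
      adjJ M 2 2 * (M 2 2 / isq2) := by
    linear_combination -isq2⁻¹ * h_unitary
  apply isq2_inv_notMem_ringO₂
  rw [h_inv]
  exact add_mem (add_mem (mul_mem hA20 h02) (mul_mem hA21 h12)) (mul_mem hA22 h22)

theorem g₁'_eq : g₁' = !![0, 0, -isq2⁻¹; 0, 1, 0; isq2, 0, 0] := by
  rw [g₁', I_div_sqrt_two_eq_neg_inv_isq2, isq2]

theorem g₂'_eq : g₂' = !![1, 0, -isq2⁻¹; 0, 1, 0; 0, 0, 1] := by
  rw [g₂', I_div_sqrt_two_eq_neg_inv_isq2]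

theorem adjJ_g₁' : adjJ g₁' = !![0, 0, isq2⁻¹; 0, 1, 0; -isq2, 0, 0] := by
  ext i j
  rw [adjJ_apply, g₁'_eq]
  fin_cases i <;> fin_cases j <;> simp [-Complex.star_def, star_isq2]

theorem adjJ_g₂' : adjJ g₂' = !![1, 0, isq2⁻¹; 0, 1, 0; 0, 0, 1] := by
  ext i j
  rw [adjJ_apply, g₂'_eq]
  fin_cases i <;> fin_cases j <;> simp [-Complex.star_def, star_isq2]

theorem g₁'_mem_GammaS2 : g₁' ∈ GammaS2 := by
  rw [mem_GammaS2_iff_isTiled, inU21_iff_adjJ_mul_self, adjJ_g₁', g₁'_eq]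
  refine ⟨by simp [one_fin_three, isq2_ne_zero], fun i j ↦ ?_⟩
  fin_cases i <;> fin_cases j <;> simp [sisterExp, isq2_ne_zero]

theorem g₂'_mem_GammaS2 : g₂' ∈ GammaS2 := by
  rw [mem_GammaS2_iff_isTiled, inU21_iff_adjJ_mul_self, adjJ_g₂', g₂'_eq]
  refine ⟨by simp [one_fin_three], fun i j ↦ ?_⟩
  fin_cases i <;> fin_cases j <;> simp [sisterExp, isq2_ne_zero]

theorem mem_image_g₁'_mul_H2_iff :
    M ∈ (g₁' * ·) '' H2 ↔ M ∈ GammaS2 ∧ M 2 2 / isq2 ∈ ringO₂ := by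
  have h_corner : (adjJ g₁' * M) 0 2 = M 2 2 / isq2 := by
    simp [adjJ_g₁', mul_apply, Fin.sum_univ_three, div_eq_inv_mul]
  rw [mem_image_mul_H2_iff g₁'_mem_GammaS2, h_corner]

theorem mem_image_g₂'_mul_H2_iff :
    M ∈ (g₂' * ·) '' H2 ↔ M ∈ GammaS2 ∧ M 0 2 + M 2 2 / isq2 ∈ ringO₂ := by
  have h_corner : (adjJ g₂' * M) 0 2 = M 0 2 + M 2 2 / isq2 := by
    simp [adjJ_g₂', mul_apply, Fin.sum_univ_three, div_eq_inv_mul]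
  rw [mem_image_mul_H2_iff g₂'_mem_GammaS2, h_corner]

end Sister

/-- `Γ_s^(2)` is the disjoint union of the three left cosets `H^(2)`, `g₁'H^(2)`, `g₂'H^(2)`. -/
theorem gammaS2_coset_decomposition :
    (GammaS2 = H2 ∪ (g₁' * ·) '' H2 ∪ (g₂' * ·) '' H2) ∧
    Disjoint H2 ((g₁' * ·) '' H2) ∧
    Disjoint H2 ((g₂' * ·) '' H2) ∧
    Disjoint ((g₁' * ·) '' H2) ((g₂' * ·) '' H2) := by
  simp only [Set.disjoint_left, Set.ext_iff, Set.mem_union, mem_H2_iff, mem_image_g₁'_mul_H2_iff,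
    mem_image_g₂'_mul_H2_iff]
  refine ⟨fun M ↦ ⟨fun hM ↦ ?_, ?_⟩, ?_, ?_, ?_⟩
  · have h_cover := upper_right_or_lower_right_div_or_add_mem_ringO₂ hM
    tauto
  · tauto
  · rintro M ⟨hM, h02⟩ ⟨-, h22⟩
    exact lower_right_div_notMem_ringO₂ hM h02 h22
  · rintro M ⟨hM, h02⟩ ⟨-, h_add⟩
    exact lower_right_div_notMem_ringO₂ hM h02 ((add_mem_cancel_left h02).1 h_add)
  · rintro M ⟨hM, h22⟩ ⟨-, h_add⟩
    exact lower_right_div_notMem_ringO₂ hM ((add_mem_cancel_right h22).1 h_add) h22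
end
end

section
/- Every M ∈ Γ_s^(7) with M₂₁ = M₃₁ = 0 can be written as ε·W, where ε ∈ {1,−1} and W is a finite product of the matrices R₁ = [[1,0,0],[0,−1,0],[0,0,1]], R₂ = [[1,1,iω₇/√7],[0,−1,1],[0,0,1]], R₃ = [[1,ω̄₇,−1],[0,−1,ω₇],[0,0,1]], T = [[1,0,i/√7],[0,1,0],[0,0,1]] and their inverses, where ω₇ = (1+i√7)/2. In other words, the stabilizer of q_∞ in Γ_s^(7) is generated, modulo ±I, by R₁, R₂, R₃ and T. -/
noncomputable section

open Matrix

/-!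
An isometry fixing `q_∞` is upper triangular, so it is a Heisenberg translation times a diagonal
matrix. Over `O₇`, whose only units are `±1`, the diagonal part is `±1` or `±R₁`. A translation
has a horizontal part `z` and a vertical part `v`; for integral translations `z` ranges over `O₇`,
and those with `z = 0` form the infinite cyclic group generated by `T`. The translations `R₂R₁`
and `R₃R₁` have horizontal parts `1` and `ω₇`, which generate `O₇`.
-/

open Complex ComplexConjugate

section RingOfIntegers

variable {z w : ℂ}

lemma two_mul_ω₇ : 2 * ω₇ = 1 + isq7 := by
  rw [ω₇, isq7]
  ring

lemma isq7_sq : isq7 ^ 2 = -7 := by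
  rw [isq7, mul_pow, I_sq, ← ofReal_pow, Real.sq_sqrt (by norm_num)]
  norm_num

lemma isq7_ne_zero : isq7 ≠ 0 := by
  intro h
  simpa [h] using isq7_sq

lemma conj_isq7 : conj isq7 = -isq7 := by
  simp [isq7]

lemma conj_ω₇ : conj ω₇ = 1 - ω₇ := by
  simp only [ω₇, map_div₀, map_add, map_mul, map_one, conj_I, conj_ofReal, map_ofNat]
  ring

lemma ω₇_sq : ω₇ ^ 2 = ω₇ - 2 := by
  linear_combination isq7_sq / 4 + (2 * ω₇ + isq7 - 1) / 4 * two_mul_ω₇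

lemma I_div_sqrt_seven : I / (√7 : ℝ) = -isq7⁻¹ := by
  simp [isq7, div_eq_mul_inv, mul_comm]

/-- The ring of integers `O₇` of `ℚ(i√7)`, bundling `inO7` as a subring of `ℂ`. -/
def O₇ : Subring ℂ where
  carrier := {z | inO7 z}
  mul_mem' := by
    rintro _ _ ⟨a, b, rfl⟩ ⟨c, d, rfl⟩
    refine ⟨a * c - 2 * b * d, a * d + b * c + b * d, ?_⟩
    push_cast
    linear_combination (b * d : ℂ) * ω₇_sq
  one_mem' := ⟨1, 0, by simp⟩
  add_mem' := by
    rintro _ _ ⟨a, b, rfl⟩ ⟨c, d, rfl⟩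
    exact ⟨a + c, b + d, by push_cast; ring⟩
  zero_mem' := ⟨0, 0, by simp⟩
  neg_mem' := by
    rintro _ ⟨a, b, rfl⟩
    exact ⟨-a, -b, by push_cast; ring⟩

lemma ω₇_mem_O₇ : ω₇ ∈ O₇ := ⟨0, 1, by simp⟩

lemma isq7_mem_O₇ : isq7 ∈ O₇ :=
  ⟨-1, 2, by push_cast; linear_combination -two_mul_ω₇⟩

lemma conj_mem_O₇ (hz : z ∈ O₇) : conj z ∈ O₇ := by
  obtain ⟨a, b, rfl⟩ := hz
  refine ⟨a + b, -b, ?_⟩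
  simp only [map_add, map_mul, map_intCast, conj_ω₇, Int.cast_add, Int.cast_neg]
  ring

lemma exists_eq_intCast_of_mem_O₇_of_conj_eq (hz : z ∈ O₇) (hconj : conj z = z) :
    ∃ n : ℤ, z = n := by
  obtain ⟨a, b, rfl⟩ := hz
  have hb : (b : ℂ) * isq7 = 0 := by
    simp only [map_add, map_mul, map_intCast, conj_ω₇] at hconj
    linear_combination -hconj - (b : ℂ) * two_mul_ω₇
  have hb : (b : ℂ) = 0 := (mul_eq_zero.mp hb).resolve_right isq7_ne_zero
  exact ⟨a, by rw [hb, zero_mul, add_zero]⟩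

lemma conj_mul_self_intCast_add_intCast_mul_ω₇ (a b : ℤ) :
    conj (a + b * ω₇) * (a + b * ω₇) = (a ^ 2 + a * b + 2 * b ^ 2 : ℤ) := by
  simp only [map_add, map_mul, map_intCast, conj_ω₇]
  push_cast
  linear_combination -(b : ℂ) ^ 2 * ω₇_sq

lemma exists_natCast_eq_conj_mul_self (hz : z ∈ O₇) : ∃ n : ℕ, conj z * z = n := by
  obtain ⟨a, b, rfl⟩ := hz
  have hn : 0 ≤ a ^ 2 + a * b + 2 * b ^ 2 := by nlinarith [sq_nonneg (2 * a + b)]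
  lift a ^ 2 + a * b + 2 * b ^ 2 to ℕ using hn with n h
  exact ⟨n, by rw [conj_mul_self_intCast_add_intCast_mul_ω₇, ← h, Int.cast_natCast]⟩

lemma eq_one_or_eq_neg_one_of_conj_mul_self_eq_one (hz : z ∈ O₇) (h : conj z * z = 1) :
    z = 1 ∨ z = -1 := by
  obtain ⟨a, b, rfl⟩ := hz
  have hab : a ^ 2 + a * b + 2 * b ^ 2 = 1 := by
    rw [conj_mul_self_intCast_add_intCast_mul_ω₇] at h
    exact_mod_cast h
  have hb : b = 0 := by
    have : b < 1 := by nlinarith [sq_nonneg (2 * a + b)]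
    have : -1 < b := by nlinarith [sq_nonneg (2 * a + b)]
    lia
  subst hb
  have ha : a = 1 ∨ a = -1 := by simpa using hab
  rcases ha with rfl | rfl <;> simp

lemma eq_one_or_eq_neg_one_of_conj_mul_eq_one (hz : z ∈ O₇) (hw : w ∈ O₇)
    (h : conj z * w = 1) : (z = 1 ∨ z = -1) ∧ w = z := by
  obtain ⟨m, hm⟩ := exists_natCast_eq_conj_mul_self hz
  obtain ⟨n, hn⟩ := exists_natCast_eq_conj_mul_self hw
  have hmn : m * n = 1 := by
    have h' : z * conj w = 1 := by simpa using congrArg conj h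
    have : (m * n : ℂ) = 1 := by
      rw [← hm, ← hn]
      linear_combination (z * conj w) * h + h'
    exact_mod_cast this
  have hzz : conj z * z = 1 := by rw [hm, Nat.eq_one_of_mul_eq_one_right hmn, Nat.cast_one]
  have hz0 : conj z ≠ 0 := left_ne_zero_of_mul_eq_one h
  exact ⟨eq_one_or_eq_neg_one_of_conj_mul_self_eq_one hz hzz,
    mul_left_cancel₀ hz0 (h.trans hzz.symm)⟩

end RingOfIntegers

section Heisenberg

variable {z w v u : ℂ}

/-- The matrix of the Heisenberg translation with horizontal part `z` and vertical part `v`.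
It preserves the form `matJ` exactly when `v + conj z * z + conj v = 0`. -/
def heisenberg (z v : ℂ) : Matrix (Fin 3) (Fin 3) ℂ :=
  !![1, -conj z, v; 0, 1, z; 0, 0, 1]

lemma heisenberg_zero_zero : heisenberg 0 0 = 1 := by
  simp [heisenberg, one_fin_three]

lemma heisenberg_mul (z v w u : ℂ) :
    heisenberg z v * heisenberg w u = heisenberg (z + w) (v + u - conj z * w) := by
  ext i j
  fin_cases i <;> fin_cases j <;>
    simp [heisenberg, Matrix.mul_apply, Fin.sum_univ_three] <;> ring

lemma inv_heisenberg (z v : ℂ) :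
    (heisenberg z v)⁻¹ = heisenberg (-z) (-v - conj z * z) := by
  refine inv_eq_right_inv ?_
  rw [heisenberg_mul, ← heisenberg_zero_zero]
  ring_nf

/-- The parameters `(z, v)` of the Heisenberg translations in `Γ_s^(7)`: both satisfy the
integrality conditions of the sister group, and the translation preserves the form. -/
structure IsIntegralTranslation (z v : ℂ) : Prop where
  horizontal_mem : z ∈ O₇
  vertical_mem : isq7 * v ∈ O₇
  isotropic : v + conj z * z + conj v = 0

namespace IsIntegralTranslation

lemma one : IsIntegralTranslation 0 0 :=
  ⟨zero_mem _, by rw [mul_zero]; exact zero_mem _, by simp⟩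

lemma mul (h : IsIntegralTranslation z v) (h' : IsIntegralTranslation w u) :
    IsIntegralTranslation (z + w) (v + u - conj z * w) where
  horizontal_mem := add_mem h.horizontal_mem h'.horizontal_mem
  vertical_mem := by
    rw [mul_sub, mul_add]
    exact sub_mem (add_mem h.vertical_mem h'.vertical_mem)
      (mul_mem isq7_mem_O₇ (mul_mem (conj_mem_O₇ h.horizontal_mem) h'.horizontal_mem))
  isotropic := by
    simp only [map_add, map_sub, map_mul, conj_conj]
    linear_combination h.isotropic + h'.isotropic

lemma inv (h : IsIntegralTranslation z v) :
    IsIntegralTranslation (-z) (-v - conj z * z) where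
  horizontal_mem := neg_mem h.horizontal_mem
  vertical_mem := by
    rw [mul_sub, mul_neg]
    exact sub_mem (neg_mem h.vertical_mem)
      (mul_mem isq7_mem_O₇ (mul_mem (conj_mem_O₇ h.horizontal_mem) h.horizontal_mem))
  isotropic := by
    simp only [map_sub, map_neg, map_mul, conj_conj]
    linear_combination -h.isotropic

lemma exists_eq_zsmul (h : IsIntegralTranslation 0 v) : ∃ n : ℤ, v = n • -isq7⁻¹ := by
  have hreal : conj (isq7 * v) = isq7 * v := by
    rw [map_mul, conj_isq7]
    linear_combination -isq7 * h.isotropic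
  obtain ⟨n, hn⟩ := exists_eq_intCast_of_mem_O₇_of_conj_eq h.vertical_mem hreal
  refine ⟨-n, ?_⟩
  rw [neg_smul_neg, zsmul_eq_mul, ← hn, mul_comm, inv_mul_cancel_left₀ isq7_ne_zero]

end IsIntegralTranslation

end Heisenberg

namespace inU21

variable {M : Matrix (Fin 3) (Fin 3) ℂ}

lemma form_apply (hM : inU21 M) (i j : Fin 3) :
    conj (M 2 i) * M 0 j + conj (M 1 i) * M 1 j + conj (M 0 i) * M 2 j = matJ i j := by
  rw [← hM.2]
  simp [matJ, Matrix.mul_apply, Fin.sum_univ_three]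

variable (hM : inU21 M) (h10 : M 1 0 = 0) (h20 : M 2 0 = 0)
include hM h10 h20

lemma conj_apply_zero_mul_apply_two : conj (M 0 0) * M 2 2 = 1 := by
  simpa [h10, h20, matJ] using hM.form_apply 0 2

lemma apply_two_one : M 2 1 = 0 := by
  have h00 : conj (M 0 0) ≠ 0 :=
    left_ne_zero_of_mul_eq_one (hM.conj_apply_zero_mul_apply_two h10 h20)
  have h : conj (M 0 0) * M 2 1 = 0 := by
    simpa only [h10, h20, matJ, of_apply, cons_val, map_zero, zero_mul, zero_add]
      using hM.form_apply 0 1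
  exact (mul_eq_zero.mp h).resolve_left h00

lemma conj_apply_one_mul_self : conj (M 1 1) * M 1 1 = 1 := by
  simpa [hM.apply_two_one h10 h20, matJ] using hM.form_apply 1 1

lemma eq_heisenberg_mul_diagonal :
    M = heisenberg (M 1 2 / M 2 2) (M 0 2 / M 2 2) * diagonal ![M 0 0, M 1 1, M 2 2] := by
  have h22 : M 2 2 ≠ 0 :=
    right_ne_zero_of_mul_eq_one (hM.conj_apply_zero_mul_apply_two h10 h20)
  have h21 := hM.apply_two_one h10 h20
  have h01 : M 0 1 = -(conj (M 1 2) / conj (M 2 2) * M 1 1) := by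
    have h := hM.form_apply 2 1
    simp only [h21, matJ, of_apply, cons_val, mul_zero, add_zero] at h
    have h22' : conj (M 2 2) ≠ 0 := (map_ne_zero _).mpr h22
    field_simp
    linear_combination h
  ext i j
  fin_cases i <;> fin_cases j <;> simp [heisenberg, h10, h20, h21, h22, h01]

lemma isotropic_div :
    M 0 2 / M 2 2 + conj (M 1 2 / M 2 2) * (M 1 2 / M 2 2) + conj (M 0 2 / M 2 2) = 0 := by
  have h22 : M 2 2 ≠ 0 :=
    right_ne_zero_of_mul_eq_one (hM.conj_apply_zero_mul_apply_two h10 h20)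
  have h22' : conj (M 2 2) ≠ 0 := (map_ne_zero _).mpr h22
  have h := hM.form_apply 2 2
  simp only [matJ, of_apply, cons_val] at h
  rw [map_div₀, map_div₀]
  field_simp
  linear_combination h

end inU21

namespace GammaS7

variable {M : Matrix (Fin 3) (Fin 3) ℂ} (hM : GammaS7 M) (h10 : M 1 0 = 0) (h20 : M 2 0 = 0)
include hM h10 h20

lemma apply_zero_zero_eq_one_or_eq_neg_one : M 0 0 = 1 ∨ M 0 0 = -1 := by
  obtain ⟨hU, h00, -, -, -, h22, -⟩ := hM
  exact (eq_one_or_eq_neg_one_of_conj_mul_eq_one h00 h22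
    (hU.conj_apply_zero_mul_apply_two h10 h20)).1

lemma apply_two_two_eq_apply_zero_zero : M 2 2 = M 0 0 := by
  obtain ⟨hU, h00, -, -, -, h22, -⟩ := hM
  exact (eq_one_or_eq_neg_one_of_conj_mul_eq_one h00 h22
    (hU.conj_apply_zero_mul_apply_two h10 h20)).2

lemma apply_one_one_eq_one_or_eq_neg_one : M 1 1 = 1 ∨ M 1 1 = -1 := by
  obtain ⟨hU, -, -, h11, -⟩ := hM
  exact eq_one_or_eq_neg_one_of_conj_mul_self_eq_one h11 (hU.conj_apply_one_mul_self h10 h20)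

lemma isIntegralTranslation_div :
    IsIntegralTranslation (M 1 2 / M 2 2) (M 0 2 / M 2 2) := by
  have hsign := hM.apply_zero_zero_eq_one_or_eq_neg_one h10 h20
  have h22 := hM.apply_two_two_eq_apply_zero_zero h10 h20
  obtain ⟨hU, -, -, -, h12, -, h02, -⟩ := hM
  have div_mem {z : ℂ} (hz : z ∈ O₇) : z / M 2 2 ∈ O₇ := by
    rcases hsign with h | h <;> simpa [h22, h, div_neg] using hz
  exact ⟨div_mem h12, by rw [← mul_div_assoc]; exact div_mem h02, hU.isotropic_div h10 h20⟩

end GammaS7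

lemma inv_mem_closure {n R : Type*} [Fintype n] [DecidableEq n] [CommRing R]
    {S : Set (Matrix n n R)} (hS : ∀ A ∈ S, A⁻¹ ∈ S) {A : Matrix n n R}
    (hA : A ∈ Submonoid.closure S) : A⁻¹ ∈ Submonoid.closure S := by
  induction hA using Submonoid.closure_induction with
  | mem A hA => exact Submonoid.subset_closure (hS A hA)
  | one => rw [inv_one]; exact one_mem _
  | mul A B _ _ hA hB => rw [Matrix.mul_inv_rev]; exact mul_mem hB hA

section Generation

variable {z v : ℂ}

/-- The group generated by `R₁`, `R₂`, `R₃` and `T`, encoded as a submonoid of the matrix ring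
with the inverses among the generators. -/
def generatedGroup : Submonoid (Matrix (Fin 3) (Fin 3) ℂ) :=
  Submonoid.closure {R₁, R₂, R₃, T, R₁⁻¹, R₂⁻¹, R₃⁻¹, T⁻¹}

lemma inv_mem_generatedGroup {A : Matrix (Fin 3) (Fin 3) ℂ} (hA : A ∈ generatedGroup) :
    A⁻¹ ∈ generatedGroup := by
  refine inv_mem_closure ?_ hA
  have h₁ : R₁⁻¹⁻¹ = R₁ := nonsing_inv_nonsing_inv _ (by simp [R₁, det_fin_three])
  have h₂ : R₂⁻¹⁻¹ = R₂ := nonsing_inv_nonsing_inv _ (by simp [R₂, det_fin_three])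
  have h₃ : R₃⁻¹⁻¹ = R₃ := nonsing_inv_nonsing_inv _ (by simp [R₃, det_fin_three])
  have h₄ : T⁻¹⁻¹ = T := nonsing_inv_nonsing_inv _ (by simp [T, det_fin_three])
  rintro _ (rfl | rfl | rfl | rfl | rfl | rfl | rfl | rfl) <;> simp [h₁, h₂, h₃, h₄]

lemma R₁_mem_generatedGroup : R₁ ∈ generatedGroup := Submonoid.subset_closure (by simp)

lemma R₂_mem_generatedGroup : R₂ ∈ generatedGroup := Submonoid.subset_closure (by simp)

lemma R₃_mem_generatedGroup : R₃ ∈ generatedGroup := Submonoid.subset_closure (by simp)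

lemma T_mem_generatedGroup : T ∈ generatedGroup := Submonoid.subset_closure (by simp)

lemma R₂_mul_R₁ : R₂ * R₁ = heisenberg 1 (-(ω₇ * isq7⁻¹)) := by
  rw [R₂, mul_div_right_comm, I_div_sqrt_seven, R₁]
  ext i j
  fin_cases i <;> fin_cases j <;>
    simp [heisenberg, Matrix.mul_apply, Fin.sum_univ_three, mul_comm]

lemma R₃_mul_R₁ : R₃ * R₁ = heisenberg ω₇ (-1) := by
  ext i j
  fin_cases i <;> fin_cases j <;>
    simp [R₃, R₁, heisenberg, Matrix.mul_apply, Fin.sum_univ_three]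

lemma T_eq_heisenberg : T = heisenberg 0 (-isq7⁻¹) := by
  simp [T, I_div_sqrt_seven, heisenberg]

lemma isIntegralTranslation_R₂_mul_R₁ : IsIntegralTranslation 1 (-(ω₇ * isq7⁻¹)) where
  horizontal_mem := one_mem _
  vertical_mem := by
    have h : isq7 * -(ω₇ * isq7⁻¹) = -ω₇ := by field_simp [isq7_ne_zero]
    rw [h]
    exact neg_mem ω₇_mem_O₇
  isotropic := by
    simp only [map_neg, map_mul, map_inv₀, map_one, conj_ω₇, conj_isq7, inv_neg]
    linear_combination -isq7⁻¹ * two_mul_ω₇ - inv_mul_cancel₀ isq7_ne_zero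

lemma isIntegralTranslation_R₃_mul_R₁ : IsIntegralTranslation ω₇ (-1) where
  horizontal_mem := ω₇_mem_O₇
  vertical_mem := mul_mem isq7_mem_O₇ (neg_mem (one_mem _))
  isotropic := by
    simp only [map_neg, map_one, conj_ω₇]
    linear_combination -ω₇_sq

/-- The vertical parts of the vertical translations in `generatedGroup`. -/
def verticalParts : AddSubgroup ℂ where
  carrier := {v | heisenberg 0 v ∈ generatedGroup}
  zero_mem' := by simp [heisenberg_zero_zero]
  add_mem' {v u} (hv : heisenberg 0 v ∈ generatedGroup) (hu : heisenberg 0 u ∈ generatedGroup) := by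
    simpa [heisenberg_mul] using mul_mem hv hu
  neg_mem' {v} (hv : heisenberg 0 v ∈ generatedGroup) := by
    simpa [inv_heisenberg] using inv_mem_generatedGroup hv

lemma IsIntegralTranslation.heisenberg_zero_mem (h : IsIntegralTranslation 0 v) :
    heisenberg 0 v ∈ generatedGroup := by
  have hT : heisenberg 0 (-isq7⁻¹) ∈ generatedGroup := T_eq_heisenberg ▸ T_mem_generatedGroup
  obtain ⟨n, rfl⟩ := h.exists_eq_zsmul
  exact verticalParts.zsmul_mem hT n

/-- The horizontal parts of the integral translations in `generatedGroup`. -/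
def horizontalParts : AddSubgroup ℂ where
  carrier := {z | ∃ v, IsIntegralTranslation z v ∧ heisenberg z v ∈ generatedGroup}
  zero_mem' := ⟨0, .one, heisenberg_zero_zero ▸ one_mem _⟩
  add_mem' := by
    rintro z w ⟨v, hv, hvG⟩ ⟨u, hu, huG⟩
    exact ⟨_, hv.mul hu, heisenberg_mul z v w u ▸ mul_mem hvG huG⟩
  neg_mem' := by
    rintro z ⟨v, hv, hvG⟩
    exact ⟨_, hv.inv, inv_heisenberg z v ▸ inv_mem_generatedGroup hvG⟩

lemma mem_horizontalParts_of_mem_O₇ (hz : z ∈ O₇) : z ∈ horizontalParts := by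
  have h_one : 1 ∈ horizontalParts := ⟨_, isIntegralTranslation_R₂_mul_R₁,
    R₂_mul_R₁ ▸ mul_mem R₂_mem_generatedGroup R₁_mem_generatedGroup⟩
  have h_ω₇ : ω₇ ∈ horizontalParts := ⟨_, isIntegralTranslation_R₃_mul_R₁,
    R₃_mul_R₁ ▸ mul_mem R₃_mem_generatedGroup R₁_mem_generatedGroup⟩
  obtain ⟨a, b, rfl⟩ := hz
  simpa using add_mem (zsmul_mem h_one a) (zsmul_mem h_ω₇ b)

lemma IsIntegralTranslation.heisenberg_mem (h : IsIntegralTranslation z v) :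
    heisenberg z v ∈ generatedGroup := by
  obtain ⟨u, hu, huG⟩ := mem_horizontalParts_of_mem_O₇ h.horizontal_mem
  obtain ⟨t, ht, hvt⟩ : ∃ t, IsIntegralTranslation 0 t ∧
      heisenberg z v = heisenberg 0 t * heisenberg z u := by
    refine ⟨v - u, ?_, ?_⟩
    · convert h.mul hu.inv using 1 <;> ring
    · simp [heisenberg_mul]
  rw [hvt]
  exact mul_mem ht.heisenberg_zero_mem huG

lemma exists_mem_generatedGroup_diagonal_eq_smul {ε δ : ℂ} (hε : ε = 1 ∨ ε = -1)
    (hδ : δ = 1 ∨ δ = -1) : ∃ A ∈ generatedGroup, diagonal ![ε, δ, ε] = ε • A := by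
  have hR₁ : R₁ = diagonal ![1, -1, 1] := by
    simp [R₁, diagonal_fin_three]
  have h_one : (1 : Matrix (Fin 3) (Fin 3) ℂ) = diagonal ![1, 1, 1] := by
    simp [diagonal_fin_three, one_fin_three]
  rcases eq_or_ne δ ε with rfl | hne
  · exact ⟨1, one_mem _, by simp [h_one, ← diagonal_smul]⟩
  · have hδε : δ = -ε := by rcases hε with rfl | rfl <;> rcases hδ with rfl | rfl <;> simp_all
    exact ⟨R₁, R₁_mem_generatedGroup, by simp [hδε, hR₁, ← diagonal_smul]⟩

end Generation

/-- The stabilizer of `q_∞` in `Γ_s^(7)` is generated, modulo `±I`, by `R₁, R₂, R₃, T`. -/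
theorem gammaS7_stabilizer_generated (M : Matrix (Fin 3) (Fin 3) ℂ) (hM : GammaS7 M)
    (h21 : M 1 0 = 0) (h31 : M 2 0 = 0) :
    ∃ (ε : ℂ) (L : List (Matrix (Fin 3) (Fin 3) ℂ)),
      (ε = 1 ∨ ε = -1) ∧
      (∀ A ∈ L, A ∈ ({R₁, R₂, R₃, T, R₁⁻¹, R₂⁻¹, R₃⁻¹, T⁻¹} :
        Set (Matrix (Fin 3) (Fin 3) ℂ))) ∧
      M = ε • L.prod := by
  have hsign := hM.apply_zero_zero_eq_one_or_eq_neg_one h21 h31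
  have h22 := hM.apply_two_two_eq_apply_zero_zero h21 h31
  have htrans := (hM.isIntegralTranslation_div h21 h31).heisenberg_mem
  obtain ⟨A, hA, hdiag⟩ := exists_mem_generatedGroup_diagonal_eq_smul hsign
    (hM.apply_one_one_eq_one_or_eq_neg_one h21 h31)
  obtain ⟨L, hL, hprod⟩ := Submonoid.exists_list_of_mem_closure (mul_mem htrans hA)
  refine ⟨M 0 0, L, hsign, hL, ?_⟩
  calc
    M = heisenberg (M 1 2 / M 2 2) (M 0 2 / M 2 2) * diagonal ![M 0 0, M 1 1, M 2 2] :=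
      hM.1.eq_heisenberg_mul_diagonal h21 h31
    _ = heisenberg (M 1 2 / M 2 2) (M 0 2 / M 2 2) * M 0 0 • A := by rw [← hdiag, h22]
    _ = M 0 0 • L.prod := by rw [Matrix.mul_smul, hprod]
end
end
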